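/- Let β ∈ E_∞ with coding (s_k), i.e. s_1 ∈ F_e, s_k ∈ F for k ≥ 2, and β ∈ J^{s_1•…•s_k} for every k ≥ 1. Then τ(β) = lim_{n→∞} (s_1•…•s_n 0^∞)_β. -/

import Mathlib

open Set Filter MeasureTheory Topology

noncomputable section

/-- The β-transformation `x ↦ βx - ⌊βx⌋`. -/
def Tbeta (β x : ℝ) : ℝ := Int.fract (β * x)

/-- The survivor set `K_β(t)`: points of `[0,1)` whose orbit never enters `[0,t)`. -/
def survivor (β t : ℝ) : Set ℝ :=
  {x | x ∈ Set.Ico (0 : ℝ) 1 ∧ ∀ n : ℕ, t ≤ (Tbeta β)^[n] x}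

/-- The set-valued bifurcation set `E_β`. -/
def Ebif (β : ℝ) : Set ℝ :=
  {t | t ∈ Set.Ico (0 : ℝ) 1 ∧ ∀ t' : ℝ, t < t' → survivor β t' ≠ survivor β t}

/-- `(c)_β = Σ_{i≥1} c_i β^{-i}` for an infinite digit sequence (indexed from `0`). -/
def valSeq (β : ℝ) (c : ℕ → ℕ) : ℝ := ∑' i : ℕ, (c i : ℝ) / β ^ (i + 1)

/-- `(w 0^∞)_β` for a finite word `w`. -/
def valWord (β : ℝ) (w : List ℕ) : ℝ :=
  ∑ i ∈ Finset.range w.length, (w.getD i 0 : ℝ) / β ^ (i + 1)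

/-- `w⁺`: increment the last letter of `w`. -/
def wplus (w : List ℕ) : List ℕ := w.dropLast ++ [w.getLast! + 1]

/-- `w⁻`: decrement the last letter of `w`. -/
def wminus (w : List ℕ) : List ℕ := w.dropLast ++ [w.getLast! - 1]

/-- `θ`: increment every digit of `w` by one. -/
def theta (w : List ℕ) : List ℕ := w.map (· + 1)

/-- `L(w)`: the lexicographically largest cyclic permutation of `w`. -/
def maxCyc (w : List ℕ) : List ℕ := ((List.range w.length).map w.rotate).foldl max []

/-- `w^∞`: the periodic sequence with period block `w`. -/
def perSeq (w : List ℕ) : ℕ → ℕ := fun i => w.getD (i % w.length) 0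

/-- The sequence given by the word `w` followed by the sequence `c`. -/
def wordSeq (w : List ℕ) (c : ℕ → ℕ) : ℕ → ℕ :=
  fun i => if i < w.length then w.getD i 0 else c (i - w.length)

/-- Strict lexicographic order `≺` on sequences. -/
def seqLt (x y : ℕ → ℕ) : Prop := ∃ n, (∀ i < n, x i = y i) ∧ x n < y n

/-- Lexicographic order `≼` on sequences. -/
def seqLe (x y : ℕ → ℕ) : Prop := x = y ∨ seqLt x y

/-- The `n`-fold left shift `σⁿ` on sequences. -/
def shiftn (n : ℕ) (x : ℕ → ℕ) : ℕ → ℕ := fun i => x (i + n)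

/-- One step of the Farey recursion: insert the concatenation `w_i w_{i+1}`
between consecutive entries. -/
def fareyInsert : List (List ℕ) → List (List ℕ)
  | [] => []
  | [w] => [w]
  | w :: v :: rest => w :: (w ++ v) :: fareyInsert (v :: rest)

/-- The ordered set `F_n` of Farey words of level `n`. -/
def fareyLevel : ℕ → List (List ℕ)
  | 0 => [[0], [1]]
  | n + 1 => fareyInsert (fareyLevel n)

/-- `F`: all Farey words of length at least two. -/
def FareySet : Set (List ℕ) := {w | (∃ n, w ∈ fareyLevel n) ∧ w ≠ [0] ∧ w ≠ [1]}

/-- `F̂ = F ∪ {1}`. -/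
def FareyHat : Set (List ℕ) := FareySet ∪ {[1]}

/-- The extended Farey set `F_e = {θ^k(w) : w ∈ F̂, k ≥ 0}`. -/
def FareyExt : Set (List ℕ) := {w | ∃ v ∈ FareyHat, ∃ k : ℕ, w = theta^[k] v}

/-- A nonempty word is Lyndon iff it is strictly smaller than each of its nontrivial
cyclic rotations (equivalently: aperiodic and lexicographically smallest among its
cyclic permutations). -/
def IsLyndon (w : List ℕ) : Prop := w ≠ [] ∧ ∀ i, 0 < i → i < w.length → w < w.rotate i

/-- `L_e`: all Lyndon words over `ℕ ∪ {0}` except the single-letter word `0`. -/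
def LyndonExt : Set (List ℕ) := {w | IsLyndon w ∧ w ≠ [0]}

/-- `L`: Lyndon words over `{0,1}` of length at least `2`. -/
def LyndonBin : Set (List ℕ) := {w | IsLyndon w ∧ 2 ≤ w.length ∧ ∀ d ∈ w, d ≤ 1}

/-- The block of `Φ_s` emitted for current digit `d` after previous digit `p`:
`L(s)` for `00`, `s⁻` for `10`, `L(s)⁺` for `01`, `s` for `11`. -/
def phiBlock (s : List ℕ) (p d : ℕ) : List ℕ :=
  if d = 0 then (if p = 0 then maxCyc s else wminus s)
  else (if p = 0 then wplus (maxCyc s) else s)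

def phiAux (s : List ℕ) : ℕ → List ℕ → List ℕ
  | _, [] => []
  | p, d :: rest => phiBlock s p d ++ phiAux s d rest

/-- The substitution `Φ_s` on finite words; `s • r = subst s r`.  An initial digit `0`
produces `s⁻`, an initial digit `1` produces `L(s)⁺`, and thereafter runs
`0^k` resp. `1^l` produce `L(s)^{k-1}` resp. `s^{l-1}`, in accordance with
`Φ_s(0^{k₁}1^{l₁}…) = s⁻ L(s)^{k₁-1} L(s)⁺ s^{l₁-1} …` and
`Φ_s(1^{k₁}0^{l₁}…) = L(s)⁺ s^{k₁-1} s⁻ L(s)^{l₁-1} …`. -/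
def subst (s r : List ℕ) : List ℕ :=
  match r with
  | [] => []
  | d :: rest => phiBlock s (1 - d) d ++ phiAux s d rest

/-- The substitution `Φ_s` on infinite sequences, as the limit of its values
on initial segments (each digit contributes a nonempty block, so the `i`-th letter
is determined by the first `i+1` digits). -/
def phiSeq (s : List ℕ) (c : ℕ → ℕ) : ℕ → ℕ :=
  fun i => (subst s (List.ofFn fun j : Fin (i + 1) => c j)).getD i 0

/-- `Λ_e(m) = {s₁ • s₂ • … • s_m : s₁ ∈ F_e, s₂,…,s_m ∈ F}`. -/
def LambdaE (m : ℕ) : Set (List ℕ) :=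
  {w | ∃ s₁ ∈ FareyExt, ∃ rs : List (List ℕ),
    rs.length = m - 1 ∧ (∀ r ∈ rs, r ∈ FareySet) ∧ w = rs.foldl subst s₁}

/-- `Λ_e = ∪_{m≥1} Λ_e(m)`. -/
def LambdaExt : Set (List ℕ) := ⋃ m ∈ Set.Ici 1, LambdaE m

/-- `β_ℓ^S`: the base `β > 1` with `(L(S)^∞)_β = 1` (it is unique since
`β ↦ (c)_β` is strictly decreasing). -/
def betaL (S : List ℕ) : ℝ :=
  Classical.epsilon fun β : ℝ => 1 < β ∧ valSeq β (perSeq (maxCyc S)) = 1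

/-- `β_*^S`: the base `β > 1` with `(L(S)⁺ S⁻ L(S)^∞)_β = 1`. -/
def betaStar (S : List ℕ) : ℝ :=
  Classical.epsilon fun β : ℝ =>
    1 < β ∧ valSeq β (wordSeq (wplus (maxCyc S) ++ wminus S) (perSeq (maxCyc S))) = 1

/-- `β_r^S`: the base `β > 1` with `(L(S)⁺ S^∞)_β = 1`. -/
def betaR (S : List ℕ) : ℝ :=
  Classical.epsilon fun β : ℝ => 1 < β ∧ valSeq β (wordSeq (wplus (maxCyc S)) (perSeq S)) = 1

/-- The Lyndon/Farey interval `J^S = [β_ℓ^S, β_r^S]`. -/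
def Jint (S : List ℕ) : Set ℝ := Set.Icc (betaL S) (betaR S)

/-- The basic interval `I^S = [β_ℓ^S, β_*^S]`. -/
def Iint (S : List ℕ) : Set ℝ := Set.Icc (betaL S) (betaStar S)

/-- The exceptional set `E = (1,∞) ∖ ∪_{s ∈ F_e} J^s`. -/
def Eexc : Set ℝ := Set.Ioi 1 \ ⋃ s ∈ FareyExt, Jint s

/-- The relative exceptional set `E^S = (J^S ∖ I^S) ∖ ∪_{r ∈ F} J^{S•r}`. -/
def EexcRel (S : List ℕ) : Set ℝ :=
  (Jint S \ Iint S) \ ⋃ r ∈ FareySet, Jint (subst S r)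

/-- The infinitely renormalizable set `E_∞ = ∩_{m≥1} ∪_{S ∈ Λ_e(m)} J^S`. -/
def Einf : Set ℝ := ⋂ m ∈ Set.Ici 1, ⋃ S ∈ LambdaE m, Jint S

/-- `E_L = E ∪ {β_ℓ^s : s ∈ F_e}`. -/
def EL : Set ℝ := Eexc ∪ {x | ∃ s ∈ FareyExt, x = betaL s}

/-- The critical value `τ(β) = min{t > 0 : dim_H K_β(t) = 0}`. -/
def tau (β : ℝ) : ℝ := sInf {t : ℝ | 0 < t ∧ dimH (survivor β t) = 0}

end

/-! ### Lexicographic order on sequences -/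

theorem seqLt_iff_toLex (x y : ℕ → ℕ) : seqLt x y ↔ toLex x < toLex y := Iff.rfl

theorem seqLt_irrefl (x : ℕ → ℕ) : ¬ seqLt x x :=
  lt_irrefl (toLex x)

theorem seqLt_trans {x y z : ℕ → ℕ} (h : seqLt x y) (h' : seqLt y z) : seqLt x z := by
  rw [seqLt_iff_toLex] at *; exact h.trans h'

theorem seqLt_asymm {x y : ℕ → ℕ} (h : seqLt x y) : ¬ seqLt y x := by
  rw [seqLt_iff_toLex] at *; exact h.asymm

theorem seqLt_trichotomy (x y : ℕ → ℕ) : seqLt x y ∨ x = y ∨ seqLt y x :=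
  lt_trichotomy (toLex x) (toLex y)

theorem eq_of_not_seqLt {x y : ℕ → ℕ} (h : ¬ seqLt x y) (h' : ¬ seqLt y x) : x = y := by
  rcases seqLt_trichotomy x y with h1 | h1 | h1
  · exact absurd h1 h
  · exact h1
  · exact absurd h1 h'

theorem seqLt_of_lt_of_not {x y z : ℕ → ℕ} (h : seqLt x y) (h' : ¬ seqLt z y) : seqLt x z := by
  rw [seqLt_iff_toLex] at *; exact h.trans_le (not_lt.mp h')

theorem seqLt_of_not_of_lt {x y z : ℕ → ℕ} (h : ¬ seqLt y x) (h' : seqLt y z) : seqLt x z := by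
  rw [seqLt_iff_toLex] at *; exact (not_lt.mp h).trans_lt h'

theorem not_seqLt_trans {x y z : ℕ → ℕ} (h : ¬ seqLt y x) (h' : ¬ seqLt z y) : ¬ seqLt z x := by
  rw [seqLt_iff_toLex] at *; exact not_lt.mpr ((not_lt.mp h).trans (not_lt.mp h'))

@[simp] theorem shiftn_apply (n : ℕ) (x : ℕ → ℕ) (i : ℕ) : shiftn n x i = x (i + n) := rfl

@[simp] theorem shiftn_zero (x : ℕ → ℕ) : shiftn 0 x = x := rfl

theorem shiftn_shiftn (m n : ℕ) (x : ℕ → ℕ) : shiftn m (shiftn n x) = shiftn (n + m) x := by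
  funext i; simp only [shiftn_apply]; congr 1; omega

theorem seqLt_shiftn_of_agree {x y : ℕ → ℕ} {n : ℕ} (h : ∀ i < n, x i = y i) :
    seqLt (shiftn n x) (shiftn n y) ↔ seqLt x y := by
  constructor
  · rintro ⟨k, hk, hlt⟩
    refine ⟨k + n, fun i hi => ?_, hlt⟩
    by_cases hin : i < n
    · exact h i hin
    · have := hk (i - n) (by omega)
      simpa [shiftn_apply, Nat.sub_add_cancel (not_lt.mp hin)] using this
  · rintro ⟨k, hk, hlt⟩
    have hkn : n ≤ k := by
      by_contra hc
      rw [h k (by omega)] at hlt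
      exact lt_irrefl _ hlt
    refine ⟨k - n, fun i hi => hk (i + n) (by omega), ?_⟩
    simpa [shiftn_apply, Nat.sub_add_cancel hkn] using hlt

/-- Strict lexicographic order decided within the first `N` letters. -/
def ltBelow (N : ℕ) (x y : ℕ → ℕ) : Prop := ∃ k < N, (∀ i < k, x i = y i) ∧ x k < y k

theorem ltBelow.seqLt {N : ℕ} {x y : ℕ → ℕ} (h : ltBelow N x y) : seqLt x y := by
  obtain ⟨k, -, h1, h2⟩ := h; exact ⟨k, h1, h2⟩

theorem ltBelow_of_seqLt_of_agree {N : ℕ} {x y x' y' : ℕ → ℕ} (h : ltBelow N x y)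
    (hx : ∀ i < N, x i = x' i) (hy : ∀ i < N, y i = y' i) : ltBelow N x' y' := by
  obtain ⟨k, h0, h1, h2⟩ := h
  refine ⟨k, h0, fun i hi => ?_, ?_⟩
  · rw [← hx i (by omega), ← hy i (by omega), h1 i hi]
  · rw [← hx k h0, ← hy k h0]; exact h2

theorem seqLt.ltBelow_or_agree {x y : ℕ → ℕ} (h : seqLt x y) (N : ℕ) :
    ltBelow N x y ∨ ∀ i < N, x i = y i := by
  obtain ⟨k, h1, h2⟩ := h
  by_cases hk : k < N
  · exact Or.inl ⟨k, hk, h1, h2⟩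
  · exact Or.inr fun i hi => h1 i (by omega)

theorem ltBelow_of_lt_of_not {N : ℕ} {x y z : ℕ → ℕ} (h : ltBelow N x y)
    (h' : ¬ ltBelow N z y) : ltBelow N x z := by
  obtain ⟨k, h0, h1, h2⟩ := h
  by_cases hz : ∀ i ≤ k, z i = y i
  · exact ⟨k, h0, fun i hi => by rw [h1 i hi, hz i hi.le], by rw [hz k le_rfl]; exact h2⟩
  · push Not at hz
    classical
    obtain ⟨hm1, hm2⟩ := Nat.find_spec hz
    have hmin : ∀ i < Nat.find hz, z i = y i := fun i hi => by
      by_contra hc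
      exact Nat.find_min hz hi ⟨by omega, hc⟩
    set m := Nat.find hz
    rcases lt_or_gt_of_ne hm2 with hlt | hgt
    · exact absurd ⟨m, by omega, hmin, hlt⟩ h'
    · refine ⟨m, by omega, fun i hi => by rw [h1 i (by omega), hmin i hi], ?_⟩
      rcases hm1.lt_or_eq with hmk | hmk
      · rw [h1 m hmk]; exact hgt
      · rw [hmk] at hgt ⊢; exact h2.trans hgt

theorem ltBelow_of_not_of_lt {N : ℕ} {x y z : ℕ → ℕ} (h : ¬ ltBelow N y x)
    (h' : ltBelow N y z) : ltBelow N x z := by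
  obtain ⟨k, h0, h1, h2⟩ := h'
  by_cases hz : ∀ i ≤ k, x i = y i
  · exact ⟨k, h0, fun i hi => by rw [hz i hi.le, h1 i hi], by rw [hz k le_rfl]; exact h2⟩
  · push Not at hz
    classical
    obtain ⟨hm1, hm2⟩ := Nat.find_spec hz
    have hmin : ∀ i < Nat.find hz, x i = y i := fun i hi => by
      by_contra hc
      exact Nat.find_min hz hi ⟨by omega, hc⟩
    set m := Nat.find hz
    rcases lt_or_gt_of_ne hm2 with hlt | hgt
    · refine ⟨m, by omega, fun i hi => by rw [hmin i hi, h1 i (by omega)], ?_⟩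
      rcases hm1.lt_or_eq with hmk | hmk
      · rw [← h1 m hmk]; exact hlt
      · rw [hmk] at hlt ⊢; exact hlt.trans h2
    · exact absurd ⟨m, by omega, fun i hi => (hmin i hi).symm, hgt⟩ h

theorem shiftn_mul_of_periodic {N : ℕ} {a : ℕ → ℕ} (ha : ∀ k, a (k + N) = a k) (q : ℕ) :
    shiftn (q * N) a = a := by
  induction q with
  | zero => simp
  | succ q ih =>
    funext i
    have := congrFun ih i
    simp only [shiftn_apply] at this ⊢
    rw [add_mul, one_mul, ← add_assoc, ha, this]

/-- A strict comparison with a periodic sequence is decided within one period, after shifting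
by a multiple of the period. -/
theorem exists_ltBelow_shiftn_left {N : ℕ} (hN : 0 < N) {a x : ℕ → ℕ}
    (ha : ∀ k, a (k + N) = a k) (h : seqLt x a) : ∃ q, ltBelow N (shiftn (q * N) x) a := by
  obtain ⟨k, h1, h2⟩ := h
  have hk := Nat.div_add_mod' k N
  have ha' := shiftn_mul_of_periodic ha (k / N)
  refine ⟨k / N, k % N, Nat.mod_lt _ hN, fun i hi => ?_, ?_⟩
  · rw [← ha', shiftn_apply, shiftn_apply]; exact h1 _ (by omega)
  · rw [← ha', shiftn_apply, shiftn_apply, add_comm, hk]; exact h2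

theorem exists_ltBelow_shiftn_right {N : ℕ} (hN : 0 < N) {a x : ℕ → ℕ}
    (ha : ∀ k, a (k + N) = a k) (h : seqLt a x) : ∃ q, ltBelow N a (shiftn (q * N) x) := by
  obtain ⟨k, h1, h2⟩ := h
  have hk := Nat.div_add_mod' k N
  have ha' := shiftn_mul_of_periodic ha (k / N)
  refine ⟨k / N, k % N, Nat.mod_lt _ hN, fun i hi => ?_, ?_⟩
  · rw [← ha', shiftn_apply, shiftn_apply]; exact h1 _ (by omega)
  · rw [← ha', shiftn_apply, shiftn_apply, add_comm, hk]; exact h2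

/-! ### Eventually periodic sequences -/

/-- Eventual periodicity of a sequence. -/
def EvPer (d : ℕ → ℕ) : Prop := ∃ i p, 0 < p ∧ ∀ n, i ≤ n → d (n + p) = d n

theorem EvPer.of_shiftn {d : ℕ → ℕ} {m : ℕ} (h : EvPer (shiftn m d)) : EvPer d := by
  obtain ⟨i, p, hp, h⟩ := h
  refine ⟨i + m, p, hp, fun n hn => ?_⟩
  have := h (n - m) (by omega)
  simp only [shiftn_apply] at this
  rwa [show n - m + p + m = n + p by omega, show n - m + m = n by omega] at this

theorem evPer_of_periodic {d : ℕ → ℕ} {N : ℕ} (hN : 0 < N) (h : ∀ k, d (k + N) = d k) :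
    EvPer d := ⟨0, N, hN, fun n _ => h n⟩

theorem countable_evPer : {d : ℕ → ℕ | EvPer d}.Countable := by
  let f : ℕ × ℕ × List ℕ → ℕ → ℕ := fun z n =>
    if n < z.1 then z.2.2.getD n 0 else z.2.2.getD (z.1 + (n - z.1) % z.2.1) 0
  refine (Set.countable_range f).mono ?_
  rintro d ⟨i, p, hp, h⟩
  refine ⟨(i, p, (List.range (i + p)).map d), ?_⟩
  have hget : ∀ n < i + p, ((List.range (i + p)).map d).getD n 0 = d n := by
    intro n hn
    rw [List.getD_eq_getElem _ _ (by simpa using hn)]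
    simp
  have hper : ∀ q k, d (i + k + p * q) = d (i + k) := by
    intro q k
    induction q with
    | zero => simp
    | succ q ih => rw [Nat.mul_succ, ← add_assoc, h _ (by omega), ih]
  funext n
  simp only [f]
  split_ifs with hn
  · exact hget n (by omega)
  · have hlt := Nat.mod_lt (n - i) hp
    rw [hget _ (by omega), ← hper ((n - i) / p) ((n - i) % p)]
    congr 1
    have := Nat.mod_add_div (n - i) p
    omega

/-! ### Lyndon words and their largest rotations as periodic sequences -/

/-- `a` is the periodic sequence of a Lyndon word of length `N` with nonzero last letter, and `b`
is the periodic sequence of the largest cyclic permutation of that word. -/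
structure LyndonPair (N : ℕ) (a b : ℕ → ℕ) : Prop where
  pos : 0 < N
  per : ∀ k, a (k + N) = a k
  rot : ∃ j, b = shiftn j a
  last : 1 ≤ a (N - 1)
  min : ∀ i, 0 < i → i < N → seqLt a (shiftn i a)
  max : ∀ i, ¬ seqLt b (shiftn i a)

namespace LyndonPair

variable {N : ℕ} {a b : ℕ → ℕ}

theorem per_right (h : LyndonPair N a b) (k : ℕ) : b (k + N) = b k := by
  obtain ⟨j, rfl⟩ := h.rot
  simp only [shiftn_apply]
  rw [show k + N + j = k + j + N by omega, h.per]

theorem shiftn_mod (h : LyndonPair N a b) (i : ℕ) : shiftn i a = shiftn (i % N) a := by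
  have h1 := shiftn_mul_of_periodic h.per (i / N)
  conv_lhs => rw [← Nat.div_add_mod' i N]
  rw [← shiftn_shiftn, h1]

theorem not_shiftn_lt (h : LyndonPair N a b) (i : ℕ) : ¬ seqLt (shiftn i a) a := by
  rw [h.shiftn_mod]
  rcases Nat.eq_zero_or_pos (i % N) with h0 | h0
  · rw [h0]; exact seqLt_irrefl _
  · exact seqLt_asymm (h.min _ h0 (Nat.mod_lt _ h.pos))

theorem not_lt_shiftn_right (h : LyndonPair N a b) (i : ℕ) : ¬ seqLt b (shiftn i b) := by
  obtain ⟨j, hj⟩ := h.rot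
  have := h.max (j + i)
  rwa [← shiftn_shiftn, ← hj] at this

theorem not_shiftn_right_lt (h : LyndonPair N a b) (i : ℕ) : ¬ seqLt (shiftn i b) a := by
  obtain ⟨j, hj⟩ := h.rot
  rw [hj, shiftn_shiftn]
  exact h.not_shiftn_lt _

theorem shiftn_right_lt (h : LyndonPair N a b) {i : ℕ} (hi : 0 < i) (hiN : i < N) :
    seqLt (shiftn i b) b := by
  rcases seqLt_trichotomy (shiftn i b) b with h1 | h1 | h1
  · exact h1
  · exfalso
    obtain ⟨j, hj⟩ := h.rot
    have h2 : shiftn i a = a := by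
      have h3 : ∀ k, b (k + i) = b k := fun k => congrFun h1 k
      have hper := shiftn_mul_of_periodic h.per j
      have h4 : ∀ k, a k = b (k + (j * N - j)) := by
        intro k
        have hle : j ≤ j * N := Nat.le_mul_of_pos_right _ h.pos
        rw [hj, shiftn_apply, show k + (j * N - j) + j = k + j * N by omega]
        exact (congrFun hper k).symm
      funext k
      rw [shiftn_apply, h4, h4, show k + i + (j * N - j) = k + (j * N - j) + i by omega, h3]
    have := h.min i hi hiN
    rw [h2] at this
    exact seqLt_irrefl _ this
  · exact absurd h1 (h.not_lt_shiftn_right i)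

/-- A Lyndon word is smaller than each of its proper suffixes, and differs from it within the
length of the suffix. -/
theorem ltBelow_suffix (h : LyndonPair N a b) {k : ℕ} (hk : 0 < k) (hkN : k < N) :
    ltBelow (N - k) a (shiftn k a) := by
  have h1 := h.min k hk hkN
  rcases h1.ltBelow_or_agree (N - k) with h2 | h2
  · exact h2
  · exfalso
    rw [← seqLt_shiftn_of_agree h2, shiftn_shiftn, show k + (N - k) = 1 * N by omega,
      shiftn_mul_of_periodic h.per] at h1
    exact h.not_shiftn_lt _ h1

theorem suffix_ltBelow (h : LyndonPair N a b) {k : ℕ} (hk : 0 < k) (hkN : k < N) :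
    ltBelow (N - k) (shiftn k b) b := by
  have h1 := h.shiftn_right_lt hk hkN
  rcases h1.ltBelow_or_agree (N - k) with h2 | h2
  · exact h2
  · exfalso
    rw [← seqLt_shiftn_of_agree h2, shiftn_shiftn, show k + (N - k) = 1 * N by omega,
      shiftn_mul_of_periodic h.per_right] at h1
    exact h.not_lt_shiftn_right _ h1

end LyndonPair

/-! ### The substitution on sequences -/

/-- The `k`-th letter of the block emitted for the digit `d` after the digit `p`. -/
def blk (N : ℕ) (a b : ℕ → ℕ) (p d k : ℕ) : ℕ :=
  if d = 0 then (if p = 0 then b k else if k + 1 = N then a k - 1 else a k)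
  else (if p = 0 then (if k + 1 = N then b k + 1 else b k) else a k)

/-- The substitution on sequences; the digit `c 0` only serves as the predecessor of `c 1`. -/
def phiInf (N : ℕ) (a b : ℕ → ℕ) (c : ℕ → ℕ) (n : ℕ) : ℕ :=
  blk N a b (c (n / N)) (c (n / N + 1)) (n % N)

section phiInf

variable {N : ℕ} {a b : ℕ → ℕ}

theorem phiInf_apply (c : ℕ → ℕ) (q : ℕ) {k : ℕ} (hk : k < N) :
    phiInf N a b c (q * N + k) = blk N a b (c q) (c (q + 1)) k := by
  have hN : 0 < N := by omega
  have h1 : (q * N + k) / N = q := by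
    rw [add_comm, Nat.add_mul_div_right _ _ hN, Nat.div_eq_of_lt hk, zero_add]
  have h2 : (q * N + k) % N = k := by
    rw [add_comm, Nat.add_mul_mod_self_right, Nat.mod_eq_of_lt hk]
  rw [phiInf, h1, h2]

theorem phiInf_apply_zero (c : ℕ → ℕ) {k : ℕ} (hk : k < N) :
    phiInf N a b c k = blk N a b (c 0) (c 1) k := by
  simpa using phiInf_apply (a := a) (b := b) c 0 hk

theorem shiftn_phiInf (hN : 0 < N) (c : ℕ → ℕ) (q : ℕ) :
    shiftn (q * N) (phiInf N a b c) = phiInf N a b (shiftn q c) := by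
  funext n
  have h1 : (n + q * N) / N = n / N + q := Nat.add_mul_div_right _ _ hN
  have h2 : (n + q * N) % N = n % N := Nat.add_mul_mod_self_right _ _ _
  simp only [shiftn_apply, phiInf, h1, h2, add_right_comm]

theorem phiInf_one (h : LyndonPair N a b) : phiInf N a b (fun _ => 1) = a := by
  funext n
  have h1 := congrFun (shiftn_mul_of_periodic h.per (n / N)) (n % N)
  rw [shiftn_apply, Nat.mod_add_div'] at h1
  simp [phiInf, blk, h1]

theorem phiInf_zero (h : LyndonPair N a b) : phiInf N a b (fun _ => 0) = b := by
  funext n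
  have h1 := congrFun (shiftn_mul_of_periodic h.per_right (n / N)) (n % N)
  rw [shiftn_apply, Nat.mod_add_div'] at h1
  simp [phiInf, blk, h1]

/-- The substitution is strictly increasing among sequences with a common initial digit. -/
theorem phiInf_lt (h : LyndonPair N a b) {c c' : ℕ → ℕ} (h0 : c 0 = c' 0)
    (hc' : ∀ i, c' i ≤ 1) (hlt : seqLt (shiftn 1 c) (shiftn 1 c')) :
    seqLt (phiInf N a b c) (phiInf N a b c') := by
  obtain ⟨k, h1, h2⟩ := hlt
  simp only [shiftn_apply] at h1 h2
  have hN := h.pos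
  have hck : c' (k + 1) = 1 := by have := hc' (k + 1); omega
  have hck' : c (k + 1) = 0 := by omega
  have heq : ∀ i ≤ k, c i = c' i := by
    intro i hi
    rcases i with _ | i
    · exact h0
    · exact h1 i (by omega)
  refine ⟨k * N + (N - 1), fun i hi => ?_, ?_⟩
  · have hi' := Nat.div_add_mod' i N
    have hm := Nat.mod_lt i hN
    have hd : i / N ≤ k := by
      by_contra hc
      have : (k + 1) * N ≤ i / N * N := Nat.mul_le_mul_right _ (by omega)
      rw [add_mul] at this
      omega
    rcases hd.lt_or_eq with hd | hd
    · rw [phiInf, phiInf, heq _ hd.le, heq _ (by omega)]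
    · rw [← hi', hd, phiInf_apply _ _ hm, phiInf_apply _ _ hm, hck, hck', heq k le_rfl]
      have : i % N + 1 ≠ N := by rw [hd] at hi'; omega
      simp [blk, this]
  · rw [phiInf_apply _ _ (by omega), phiInf_apply _ _ (by omega), hck, hck', heq k le_rfl]
    have hl := h.last
    have : N - 1 + 1 = N := by omega
    simp only [blk, this, if_true, one_ne_zero, if_false]
    split_ifs <;> omega

theorem not_ltBelow_first (h : LyndonPair N a b) {c : ℕ → ℕ} (hc : c 0 = 0) :
    ¬ ltBelow N (phiInf N a b c) a := by
  intro hlt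
  have hb : ¬ seqLt b a := by simpa using h.not_shiftn_right_lt 0
  obtain ⟨k, hk, h1, h2⟩ := hlt
  refine hb (ltBelow.seqLt (ltBelow_of_not_of_lt ?_ ⟨k, hk, h1, h2⟩))
  rintro ⟨m, hm, -, h4⟩
  rw [phiInf_apply_zero _ hm, hc] at h4
  simp only [blk] at h4
  split_ifs at h4 <;> omega

theorem not_first_ltBelow (h : LyndonPair N a b) {c : ℕ → ℕ} (hc : c 0 ≠ 0) :
    ¬ ltBelow N b (phiInf N a b c) := by
  intro hlt
  have hb : ¬ seqLt b a := by simpa using h.max 0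
  refine hb (ltBelow.seqLt (ltBelow_of_lt_of_not hlt ?_))
  rintro ⟨m, hm, -, h4⟩
  rw [phiInf_apply_zero _ hm] at h4
  simp only [blk, hc] at h4
  split_ifs at h4 <;> omega

/-- The second block starts like `b` or like `a`, according to the digit in front of it. -/
theorem phiInf_window {c : ℕ → ℕ} {k i : ℕ} (hk : k < N) (hi : N - k ≤ i) (hiN : i < N) :
    phiInf N a b c (i + k) = if c 1 = 0 then b (i + k - N) else a (i + k - N) := by
  have h1 : i + k = 1 * N + (i + k - N) := by omega
  rw [h1, phiInf_apply _ _ (by omega), ← h1]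
  have : i + k - N + 1 ≠ N := by omega
  simp only [blk, this, if_false]
  clear h1
  split_ifs <;> rfl

theorem phiInf_window_agree (h : LyndonPair N a b) {c : ℕ → ℕ} (hc : c 0 = c 1) {k : ℕ}
    (hk : k < N) :
    ∀ i < N, shiftn k (phiInf N a b c) i = if c 1 = 0 then shiftn k b i else shiftn k a i := by
  intro i hi
  simp only [shiftn_apply]
  by_cases hik : i + k < N
  · rw [phiInf_apply_zero _ hik, hc]
    simp only [blk]
    split_ifs <;> rfl
  · rw [phiInf_window hk (by omega) hi]
    have ha := h.per (i + k - N)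
    have hb := h.per_right (i + k - N)
    rw [show i + k - N + N = i + k by omega] at ha hb
    rw [ha, hb]

theorem not_ltBelow_window_first (h : LyndonPair N a b) (c : ℕ → ℕ) {k : ℕ} (hk : 0 < k)
    (hkN : k < N) : ¬ ltBelow N (shiftn k (phiInf N a b c)) a := by
  by_cases hc : c 0 = 0 ↔ c 1 = 0
  · intro hlt
    have hag : ∀ i < N, shiftn k (phiInf N a b c) i =
        if c 1 = 0 then shiftn k b i else shiftn k a i := by
      intro i hi
      have := phiInf_window_agree h (c := fun i => if c i = 0 then 0 else 1)
        (by simp [hc]) hkN i hi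
      simp only [shiftn_apply, phiInf, blk] at this ⊢
      simpa using this
    by_cases h1 : c 1 = 0
    · simp only [h1, if_true] at hag
      exact h.not_shiftn_right_lt k
        (ltBelow_of_seqLt_of_agree hlt hag (fun _ _ => rfl)).seqLt
    · simp only [h1, if_false] at hag
      exact h.not_shiftn_lt k (ltBelow_of_seqLt_of_agree hlt hag (fun _ _ => rfl)).seqLt
  · obtain ⟨e, he, he1, he2⟩ := h.ltBelow_suffix hk hkN
    simp only [shiftn_apply] at he1 he2
    by_cases h1 : c 1 = 0
    · have h0 : c 0 ≠ 0 := by tauto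
      have hx : ∀ i, i + k + 1 < N → phiInf N a b c (i + k) = a (i + k) := by
        intro i hi
        rw [phiInf_apply_zero _ (by omega)]
        simp [blk, h1, h0, show i + k + 1 ≠ N by omega]
      have hxl : ∀ i, i + k + 1 = N → phiInf N a b c (i + k) = a (i + k) - 1 := by
        intro i hi
        rw [phiInf_apply_zero _ (by omega)]
        simp [blk, h1, h0, hi]
      rintro ⟨f, hf, hf1, hf2⟩
      simp only [shiftn_apply] at hf1 hf2
      have hfN : N ≤ f + k := by
        by_contra hc'
        rcases lt_trichotomy f e with hfe | hfe | hfe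
        · rw [he1 f hfe, hx f (by omega)] at hf2; omega
        · subst hfe
          rcases (show f + k + 1 ≤ N by omega).lt_or_eq with h3 | h3
          · rw [hx f h3] at hf2; omega
          · rw [hxl f h3] at hf2; omega
        · have := hf1 e hfe
          rw [hx e (by omega)] at this; omega
      have hpre : ∀ i < f, N ≤ i + k → b (i + k - N) = a i := by
        intro i hi hiN
        rw [← hf1 i hi, phiInf_window hkN (by omega) (by omega), if_pos h1]
      refine h.max (N - k) ⟨f + k - N, fun i hi => ?_, ?_⟩
      · simpa [show i + (N - k) + k - N = i by omega] using
          hpre (i + (N - k)) (by omega) (by omega)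
      · rw [phiInf_window hkN (by omega) hf, if_pos h1] at hf2
        simpa [show f + k - N + (N - k) = f by omega] using hf2
    · have h0 : c 0 = 0 := by tauto
      intro hlt
      have hlt' : seqLt (shiftn k b) (shiftn k (phiInf N a b c)) := by
        refine ⟨N - 1 - k, fun i hi => ?_, ?_⟩ <;> simp only [shiftn_apply]
        · rw [phiInf_apply_zero _ (by omega)]
          simp [blk, h1, h0, show i + k + 1 ≠ N by omega]
        · rw [phiInf_apply_zero _ (by omega)]
          simp [blk, h1, h0, show N - 1 - k + k + 1 = N by omega]
      exact h.not_shiftn_right_lt k (seqLt_trans hlt' hlt.seqLt)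

theorem not_window_ltBelow_first (h : LyndonPair N a b) (c : ℕ → ℕ) {k : ℕ} (hk : 0 < k)
    (hkN : k < N) : ¬ ltBelow N b (shiftn k (phiInf N a b c)) := by
  by_cases hc : c 0 = 0 ↔ c 1 = 0
  · intro hlt
    have hag : ∀ i < N, shiftn k (phiInf N a b c) i =
        if c 1 = 0 then shiftn k b i else shiftn k a i := by
      intro i hi
      have := phiInf_window_agree h (c := fun i => if c i = 0 then 0 else 1)
        (by simp [hc]) hkN i hi
      simp only [shiftn_apply, phiInf, blk] at this ⊢
      simpa using this
    by_cases h1 : c 1 = 0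
    · simp only [h1, if_true] at hag
      exact h.not_lt_shiftn_right k
        (ltBelow_of_seqLt_of_agree hlt (fun _ _ => rfl) hag).seqLt
    · simp only [h1, if_false] at hag
      exact h.max k (ltBelow_of_seqLt_of_agree hlt (fun _ _ => rfl) hag).seqLt
  · obtain ⟨e, he, he1, he2⟩ := h.suffix_ltBelow hk hkN
    simp only [shiftn_apply] at he1 he2
    by_cases h1 : c 1 = 0
    · have h0 : c 0 ≠ 0 := by tauto
      intro hlt
      have hla := h.last
      have hlt' : seqLt (shiftn k (phiInf N a b c)) (shiftn k a) := by
        refine ⟨N - 1 - k, fun i hi => ?_, ?_⟩ <;> simp only [shiftn_apply]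
        · rw [phiInf_apply_zero _ (by omega)]
          simp [blk, h1, h0, show i + k + 1 ≠ N by omega]
        · rw [phiInf_apply_zero _ (by omega)]
          rw [show N - 1 - k + k = N - 1 by omega]
          simp only [blk, h1, h0, if_true, if_false, show N - 1 + 1 = N by omega]
          omega
      exact h.max k (seqLt_trans hlt.seqLt hlt')
    · have h0 : c 0 = 0 := by tauto
      have hx : ∀ i, i + k + 1 < N → phiInf N a b c (i + k) = b (i + k) := by
        intro i hi
        rw [phiInf_apply_zero _ (by omega)]
        simp [blk, h1, h0, show i + k + 1 ≠ N by omega]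
      have hxl : ∀ i, i + k + 1 = N → phiInf N a b c (i + k) = b (i + k) + 1 := by
        intro i hi
        rw [phiInf_apply_zero _ (by omega)]
        simp [blk, h1, h0, hi]
      rintro ⟨f, hf, hf1, hf2⟩
      simp only [shiftn_apply] at hf1 hf2
      have hfN : N ≤ f + k := by
        by_contra hc'
        rcases lt_trichotomy f e with hfe | hfe | hfe
        · rw [← he1 f hfe, hx f (by omega)] at hf2; omega
        · subst hfe
          rcases (show f + k + 1 ≤ N by omega).lt_or_eq with h3 | h3
          · rw [hx f h3] at hf2; omega
          · rw [hxl f h3] at hf2; omega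
        · have := hf1 e hfe
          rw [hx e (by omega)] at this; omega
      have hpre : ∀ i < f, N ≤ i + k → b i = a (i + k - N) := by
        intro i hi hiN
        rw [hf1 i hi, phiInf_window hkN (by omega) (by omega), if_neg h1]
      refine h.not_shiftn_right_lt (N - k) ⟨f + k - N, fun i hi => ?_, ?_⟩
      · simpa [show i + (N - k) + k - N = i by omega] using
          hpre (i + (N - k)) (by omega) (by omega)
      · rw [phiInf_window hkN (by omega) hf, if_neg h1] at hf2
        simpa [show f + k - N + (N - k) = f by omega] using hf2

theorem not_ltBelow_window (h : LyndonPair N a b) (c : ℕ → ℕ) {n : ℕ}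
    (hn : n % N ≠ 0 ∨ c (n / N) = 0) : ¬ ltBelow N (shiftn n (phiInf N a b c)) a := by
  rw [← Nat.div_add_mod' n N, ← shiftn_shiftn, shiftn_phiInf h.pos]
  by_cases h0 : n % N = 0
  · rw [h0, shiftn_zero]
    exact not_ltBelow_first h (by simpa using hn.resolve_left (not_not.mpr h0))
  · exact not_ltBelow_window_first h _ (Nat.pos_of_ne_zero h0) (Nat.mod_lt _ h.pos)

theorem not_window_ltBelow (h : LyndonPair N a b) (c : ℕ → ℕ) {n : ℕ}
    (hn : n % N ≠ 0 ∨ c (n / N) ≠ 0) : ¬ ltBelow N b (shiftn n (phiInf N a b c)) := by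
  rw [← Nat.div_add_mod' n N, ← shiftn_shiftn, shiftn_phiInf h.pos]
  by_cases h0 : n % N = 0
  · rw [h0, shiftn_zero]
    exact not_first_ltBelow h (by simpa using hn.resolve_left (not_not.mpr h0))
  · exact not_window_ltBelow_first h _ (Nat.pos_of_ne_zero h0) (Nat.mod_lt _ h.pos)

end phiInf

/-! ### Renormalization -/

/-- A Lyndon pair over `{0, 1}` whose smallest word starts with `0` and whose largest word ends
with `0`. -/
structure BinaryPair (M : ℕ) (r l : ℕ → ℕ) : Prop extends LyndonPair M r l where
  le_one : ∀ i, r i ≤ 1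
  first : r 0 = 0
  last_right : l (M - 1) = 0

namespace BinaryPair

variable {M : ℕ} {r l : ℕ → ℕ}

theorem last_left (h : BinaryPair M r l) : r (M - 1) = 1 :=
  le_antisymm (h.le_one _) h.last

theorem two_le (h : BinaryPair M r l) : 2 ≤ M := by
  by_contra hc
  have h1 := h.last_left
  rw [show M - 1 = 0 by omega, h.first] at h1
  omega

theorem right_le_one (h : BinaryPair M r l) (i : ℕ) : l i ≤ 1 := by
  obtain ⟨j, rfl⟩ := h.rot
  exact h.le_one _

theorem first_right (h : BinaryPair M r l) : l 0 = 1 := by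
  refine le_antisymm (h.right_le_one 0) ?_
  by_contra hc
  refine h.max (M - 1) ⟨0, by simp, ?_⟩
  rw [shiftn_apply, zero_add, h.last_left]
  omega

theorem shiftn_pred_left (h : BinaryPair M r l) : shiftn 1 (shiftn (M - 1) r) = r := by
  rw [shiftn_shiftn, show M - 1 + 1 = 1 * M by have := h.pos; omega,
    shiftn_mul_of_periodic h.per]

theorem shiftn_pred_right (h : BinaryPair M r l) : shiftn 1 (shiftn (M - 1) l) = l := by
  rw [shiftn_shiftn, show M - 1 + 1 = 1 * M by have := h.pos; omega,
    shiftn_mul_of_periodic h.per_right]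

theorem zero_lt (h : BinaryPair M r l) : seqLt (fun _ => 0) r := by
  rcases seqLt_trichotomy (fun _ => 0) r with h1 | h1 | ⟨k, -, h1⟩
  · exact h1
  · have := h.last_left
    rw [← h1] at this
    simp at this
  · simp at h1

theorem lt_one (h : BinaryPair M r l) : seqLt l (fun _ => 1) := by
  rcases seqLt_trichotomy l (fun _ => 1) with h1 | h1 | ⟨k, -, h1⟩
  · exact h1
  · have := h.last_right
    rw [h1] at this
    simp at this
  · exact absurd (h.right_le_one k) (not_le.mpr h1)

theorem pred_left_zero (h : BinaryPair M r l) : shiftn (M - 1) r 0 = 1 := by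
  simpa using h.last_left

theorem pred_left_one (h : BinaryPair M r l) : shiftn (M - 1) r 1 = 0 :=
  (congrFun h.shiftn_pred_left 0).trans h.first

theorem pred_right_zero (h : BinaryPair M r l) : shiftn (M - 1) l 0 = 0 := by
  simpa using h.last_right

theorem pred_right_one (h : BinaryPair M r l) : shiftn (M - 1) l 1 = 1 :=
  (congrFun h.shiftn_pred_right 0).trans h.first_right

end BinaryPair

section renormalize

variable {N M : ℕ} {a b r l : ℕ → ℕ}

theorem eq_of_shiftn_one_eq {c c' : ℕ → ℕ} (h0 : c 0 = c' 0) (h : shiftn 1 c = shiftn 1 c') :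
    c = c' := by
  funext i
  rcases i with _ | i
  · exact h0
  · exact congrFun h i

theorem phiInf_ltBelow_left (h : LyndonPair N a b) {c : ℕ → ℕ} (h0 : c 0 ≠ 0) (h1 : c 1 = 0) :
    ltBelow N (phiInf N a b c) a := by
  have hN := h.pos
  have hl := h.last
  refine ⟨N - 1, by omega, fun i hi => ?_, ?_⟩ <;> rw [phiInf_apply_zero _ (by omega)]
  · simp [blk, h0, h1, show i + 1 ≠ N by omega]
  · simp only [blk, h0, h1, if_true, if_false, show N - 1 + 1 = N by omega]
    omega

theorem ltBelow_phiInf_right (h : LyndonPair N a b) {c : ℕ → ℕ} (h0 : c 0 = 0) (h1 : c 1 ≠ 0) :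
    ltBelow N b (phiInf N a b c) := by
  have hN := h.pos
  refine ⟨N - 1, by omega, fun i hi => ?_, ?_⟩ <;> rw [phiInf_apply_zero _ (by omega)]
  · simp [blk, h0, h1, show i + 1 ≠ N by omega]
  · simp [blk, h0, h1, show N - 1 + 1 = N by omega]

/-- Substituting a binary Lyndon word into a Lyndon word gives a Lyndon word, and the substitution
commutes with taking the largest cyclic permutation. -/
theorem LyndonPair.renormalize (h : LyndonPair N a b) (hr : BinaryPair M r l) :
    LyndonPair (N * M) (phiInf N a b (shiftn (M - 1) r)) (phiInf N a b (shiftn (M - 1) l)) := by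
  have hN := h.pos
  have hM := hr.two_le
  have hR0 := hr.pred_left_zero
  have hR1 := hr.pred_left_one
  have hL0 := hr.pred_right_zero
  have hL1 := hr.pred_right_one
  have hbR : ∀ q i, shiftn q (shiftn (M - 1) r) i ≤ 1 := fun q i => hr.le_one _
  have hcomm : ∀ q, shiftn 1 (shiftn q (shiftn (M - 1) r)) = shiftn q r := by
    intro q
    rw [shiftn_shiftn, add_comm q 1, ← shiftn_shiftn, hr.shiftn_pred_left]
  have hleft := phiInf_ltBelow_left h (c := shiftn (M - 1) r) (by omega) hR1
  have hright := ltBelow_phiInf_right h (c := shiftn (M - 1) l) hL0 (by omega)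
  refine ⟨Nat.mul_pos hN (by omega), fun k => ?_, ?_, ?_, fun i hi hiN => ?_, fun i => ?_⟩
  · have h1 := shiftn_phiInf (a := a) (b := b) hN (shiftn (M - 1) r) M
    rw [shiftn_shiftn, add_comm, ← shiftn_shiftn, show shiftn M r = r from by
      simpa using shiftn_mul_of_periodic hr.per 1] at h1
    rw [mul_comm N M]
    exact congrFun h1 k
  · obtain ⟨j, hj⟩ := hr.rot
    refine ⟨j * N, ?_⟩
    rw [shiftn_phiInf hN, hj, shiftn_shiftn, shiftn_shiftn, add_comm]
  · have h1 : N * M - 1 = (M - 1) * N + (N - 1) := by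
      have h2 : (M - 1) * N + N = N * M := by
        rw [mul_comm N M]
        conv_rhs => rw [← Nat.sub_add_cancel (show 1 ≤ M by omega), add_mul, one_mul]
      omega
    have h3 : shiftn (M - 1) r (M - 1 + 1) = 1 := by
      have := congrFun hr.shiftn_pred_left (M - 1)
      rw [hr.last_left] at this
      exact this
    have hl := h.last
    rw [h1, phiInf_apply _ _ (by omega), h3]
    simp only [blk, one_ne_zero, if_false, show N - 1 + 1 = N by omega, if_true]
    split_ifs <;> omega
  · by_cases hcond : i % N ≠ 0 ∨ shiftn (M - 1) r (i / N) = 0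
    · exact (ltBelow_of_lt_of_not hleft (not_ltBelow_window h _ hcond)).seqLt
    · push Not at hcond
      have hiq : i = i / N * N := by have := Nat.div_add_mod' i N; omega
      set q := i / N with hq
      have hq0 : 0 < q := by
        rcases Nat.eq_zero_or_pos q with h0 | h0
        · simp [h0] at hiq
          omega
        · exact h0
      have hqM : q < M := by
        by_contra hc
        have := Nat.mul_le_mul_left N (not_lt.mp hc)
        rw [mul_comm N q] at this
        omega
      rw [hiq, shiftn_phiInf hN]
      refine phiInf_lt h ?_ (hbR q) ?_
      · have := hbR q 0
        simp only [shiftn_apply, zero_add] at this hcond hR0 ⊢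
        omega
      · rw [hr.shiftn_pred_left, hcomm]
        exact hr.min q hq0 hqM
  · by_cases hcond : i % N ≠ 0 ∨ shiftn (M - 1) r (i / N) ≠ 0
    · exact seqLt_asymm (ltBelow_of_not_of_lt (not_window_ltBelow h _ hcond) hright).seqLt
    · push Not at hcond
      have hiq : i = i / N * N := by have := Nat.div_add_mod' i N; omega
      set q := i / N with hq
      rw [hiq, shiftn_phiInf hN]
      have h00 : shiftn q (shiftn (M - 1) r) 0 = shiftn (M - 1) l 0 := by
        have h1 := hcond.2
        rw [hL0, shiftn_apply, zero_add]
        exact h1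
      rcases seqLt_trichotomy (shiftn q r) l with h1 | h1 | h1
      · refine seqLt_asymm (phiInf_lt h h00 (fun i => hr.right_le_one _) ?_)
        rwa [hr.shiftn_pred_right, hcomm]
      · rw [eq_of_shiftn_one_eq h00 (by rw [hr.shiftn_pred_right, hcomm, h1])]
        exact seqLt_irrefl _
      · exact absurd h1 (hr.max q)

/-- Every sequence all of whose shifts lie between `a` and `b` is eventually periodic. -/
def ForcesEvPer (a b : ℕ → ℕ) : Prop :=
  ∀ d : ℕ → ℕ, (∀ i, ¬ seqLt (shiftn i d) a) → (∀ i, ¬ seqLt b (shiftn i d)) → EvPer d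

theorem agree_of_adjacent {u v x : ℕ → ℕ} (hN : 0 < N) (huv : ∀ i, i + 1 < N → u i = v i)
    (hlast : v (N - 1) = u (N - 1) + 1) (h1 : ¬ ltBelow N x u) (h2 : ¬ ltBelow N v x) :
    (∀ i < N, x i = u i) ∨ ∀ i < N, x i = v i := by
  have hpre : ∀ i, i + 1 < N → x i = u i := by
    intro i
    induction i using Nat.strong_induction_on with
    | _ i ih =>
      intro hi
      rcases lt_trichotomy (x i) (u i) with hlt | heq | hgt
      · exact absurd ⟨i, by omega, fun j hj => ih j hj (by omega), hlt⟩ h1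
      · exact heq
      · refine absurd ⟨i, by omega, fun j hj => ?_, by rwa [← huv i hi]⟩ h2
        rw [ih j hj (by omega), huv j (by omega)]
  have hge : u (N - 1) ≤ x (N - 1) := by
    by_contra hc
    exact h1 ⟨N - 1, by omega, fun j hj => hpre j (by omega), by omega⟩
  have hle : x (N - 1) ≤ v (N - 1) := by
    by_contra hc
    refine h2 ⟨N - 1, by omega, fun j hj => ?_, by omega⟩
    rw [hpre j (by omega), huv j (by omega)]
  rcases (show x (N - 1) = u (N - 1) ∨ x (N - 1) = v (N - 1) by omega) with he | he
  · refine Or.inl fun i hi => ?_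
    rcases (show i + 1 < N ∨ i = N - 1 by omega) with h3 | rfl
    exacts [hpre i h3, he]
  · refine Or.inr fun i hi => ?_
    rcases (show i + 1 < N ∨ i = N - 1 by omega) with h3 | rfl
    exacts [(hpre i h3).trans (huv i h3), he]

/-- The sequence `p d d d …`. -/
def headSeq (p d : ℕ) : ℕ → ℕ := fun i => if i = 0 then p else d

@[simp] theorem headSeq_zero (p d : ℕ) : headSeq p d 0 = p := rfl

@[simp] theorem headSeq_succ (p d i : ℕ) : headSeq p d (i + 1) = d := rfl

@[simp] theorem headSeq_one (p d : ℕ) : headSeq p d 1 = d := rfl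

@[simp] theorem shiftn_one_headSeq (p d : ℕ) : shiftn 1 (headSeq p d) = fun _ => d := rfl

theorem shiftn_phiInf_headSeq (hN : 0 < N) (p d : ℕ) :
    shiftn N (phiInf N a b (headSeq p d)) = phiInf N a b (fun _ => d) := by
  simpa using shiftn_phiInf (a := a) (b := b) hN (headSeq p d) 1

theorem blk_adjacent (h : LyndonPair N a b) (p : ℕ) :
    (∀ i, i + 1 < N → blk N a b p 0 i = blk N a b p 1 i) ∧
      blk N a b p 1 (N - 1) = blk N a b p 0 (N - 1) + 1 := by
  have hl := h.last
  have hN := h.pos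
  refine ⟨fun i hi => ?_, ?_⟩
  · simp [blk, show i + 1 ≠ N by omega]
  · simp only [blk, if_true, one_ne_zero, if_false, show N - 1 + 1 = N by omega]
    split_ifs <;> omega

/-- `ForcesEvPer` with the upper bound relaxed from `L(s)^∞` to `L(s)⁺ s^∞`. -/
theorem ForcesEvPer.relax (h : LyndonPair N a b) (hQ : ForcesEvPer a b) {d : ℕ → ℕ}
    (h1 : ∀ i, ¬ seqLt (shiftn i d) a)
    (h2 : ∀ i, ¬ seqLt (phiInf N a b (headSeq 0 1)) (shiftn i d)) : EvPer d := by
  by_cases H : ∀ i, ¬ seqLt b (shiftn i d)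
  · exact hQ d h1 H
  push Not at H
  obtain ⟨i, hi⟩ := H
  obtain ⟨q, hq⟩ := exists_ltBelow_shiftn_right h.pos h.per_right hi
  rw [shiftn_shiftn] at hq
  have hagree := agree_of_adjacent (x := shiftn (i + q * N) d) h.pos (blk_adjacent h 0).1
    (blk_adjacent h 0).2 (fun hc => seqLt_asymm hq.seqLt (ltBelow.seqLt hc)) (fun hc => by
      refine h2 (i + q * N)
        (ltBelow.seqLt (ltBelow_of_seqLt_of_agree hc (fun j hj => ?_) fun _ _ => rfl))
      rw [phiInf_apply_zero _ hj]; rfl)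
  have hag : ∀ j < N, phiInf N a b (headSeq 0 1) j = shiftn (i + q * N) d j := by
    intro j hj
    rcases hagree with hc | hc
    · exfalso
      obtain ⟨k, hk, -, hlt⟩ := hq
      rw [hc k hk] at hlt
      exact lt_irrefl _ hlt
    · rw [hc j hj, phiInf_apply_zero _ hj]; rfl
  have h3 := h2 (i + q * N)
  rw [← seqLt_shiftn_of_agree hag, shiftn_phiInf_headSeq h.pos, phiInf_one h, shiftn_shiftn] at h3
  have h4 := eq_of_not_seqLt h3 (h1 _)
  refine EvPer.of_shiftn (m := i + q * N + N) ?_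
  rw [← h4]
  exact evPer_of_periodic h.pos h.per

theorem EvPer.phiInf (hN : 0 < N) {c : ℕ → ℕ} (h : EvPer c) : EvPer (phiInf N a b c) := by
  obtain ⟨i, p, hp, h⟩ := h
  refine ⟨i * N, p * N, Nat.mul_pos hp hN, fun n hn => ?_⟩
  have h1 : (n + p * N) / N = n / N + p := Nat.add_mul_div_right _ _ hN
  have h2 : (n + p * N) % N = n % N := Nat.add_mul_mod_self_right _ _ _
  have h3 : i ≤ n / N := (Nat.le_div_iff_mul_le hN).mpr hn
  simp only [_root_.phiInf, h1, h2, h _ h3]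
  rw [add_right_comm, h _ (by omega)]

/-- A sequence whose shifts lie between the two substituted words, and which drops below `a`,
is itself in the image of the substitution. -/
theorem exists_eq_phiInf (h : LyndonPair N a b) (hr : BinaryPair M r l) {y : ℕ → ℕ}
    (h1 : ∀ i, ¬ seqLt (shiftn i y) (phiInf N a b (shiftn (M - 1) r)))
    (h2 : ∀ i, ¬ seqLt (phiInf N a b (shiftn (M - 1) l)) (shiftn i y)) (hy : seqLt y a) :
    ∃ c : ℕ → ℕ, c 0 = 1 ∧ (∀ i, c i ≤ 1) ∧ y = phiInf N a b c := by
  have hN := h.pos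
  have hR0 := hr.pred_left_zero
  have hL0 := hr.pred_right_zero
  have hR1 := hr.pred_left_one
  have hL1 := hr.pred_right_one
  have hlow : seqLt (phiInf N a b (headSeq 1 0)) (phiInf N a b (shiftn (M - 1) r)) := by
    refine phiInf_lt h (by rw [hR0]; rfl) (fun i => hr.le_one _) ?_
    rw [hr.shiftn_pred_left]
    exact hr.zero_lt
  have hupp : seqLt (phiInf N a b (shiftn (M - 1) l)) (phiInf N a b (headSeq 0 1)) := by
    refine phiInf_lt h (by rw [hL0]; rfl) (fun i => ?_) ?_
    · rcases i with _ | i <;> simp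
    · rw [hr.shiftn_pred_right]
      exact hr.lt_one
  let Inv : ℕ → ℕ → Prop := fun q p =>
    (p = 1 ∧ seqLt (shiftn (q * N) y) a) ∨ (p = 0 ∧ seqLt b (shiftn (q * N) y))
  have hstep : ∀ q p, Inv q p →
      ∃ p', (∀ k < N, y (q * N + k) = blk N a b p p' k) ∧ Inv (q + 1) p' := by
    intro q p hI
    have hsh : shiftn N (shiftn (q * N) y) = shiftn ((q + 1) * N) y := by
      rw [shiftn_shiftn, add_mul, one_mul]
    rcases hI with ⟨rfl, hI⟩ | ⟨rfl, hI⟩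
    · have hag := agree_of_adjacent (x := shiftn (q * N) y) hN (blk_adjacent h 1).1
        (blk_adjacent h 1).2 (fun hc => by
          refine h1 (q * N)
            (ltBelow.seqLt (ltBelow_of_seqLt_of_agree hc (fun _ _ => rfl) fun j hj => ?_))
          rw [phiInf_apply_zero _ hj, hR0, hR1]) (fun hc => seqLt_asymm hI (ltBelow.seqLt
            (ltBelow_of_seqLt_of_agree hc (fun j hj => by simp [blk]) fun _ _ => rfl)))
      rcases hag with hag | hag
      · refine ⟨0, fun k hk => by rw [add_comm]; exact hag k hk, Or.inr ⟨rfl, ?_⟩⟩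
        have h3 := seqLt_of_lt_of_not hlow (h1 (q * N))
        rw [← seqLt_shiftn_of_agree (n := N) (fun j hj => by
          rw [hag j hj, phiInf_apply_zero _ hj]; rfl), shiftn_phiInf_headSeq hN,
          phiInf_zero h, hsh] at h3
        exact h3
      · refine ⟨1, fun k hk => by rw [add_comm]; exact hag k hk, Or.inl ⟨rfl, ?_⟩⟩
        rw [← seqLt_shiftn_of_agree (n := N) (fun j hj => by rw [hag j hj]; simp [blk]),
          hsh, show shiftn N a = a by simpa using shiftn_mul_of_periodic h.per 1] at hI
        exact hI
    · have hag := agree_of_adjacent (x := shiftn (q * N) y) hN (blk_adjacent h 0).1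
        (blk_adjacent h 0).2 (fun hc => seqLt_asymm hI (ltBelow.seqLt
            (ltBelow_of_seqLt_of_agree hc (fun _ _ => rfl) fun j hj => by simp [blk])))
          (fun hc => by
          refine h2 (q * N)
            (ltBelow.seqLt (ltBelow_of_seqLt_of_agree hc (fun j hj => ?_) fun _ _ => rfl))
          rw [phiInf_apply_zero _ hj, hL0, hL1])
      rcases hag with hag | hag
      · refine ⟨0, fun k hk => by rw [add_comm]; exact hag k hk, Or.inr ⟨rfl, ?_⟩⟩
        rw [← seqLt_shiftn_of_agree (n := N) (fun j hj => by rw [hag j hj]; simp [blk]),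
          hsh, show shiftn N b = b by simpa using shiftn_mul_of_periodic h.per_right 1] at hI
        exact hI
      · refine ⟨1, fun k hk => by rw [add_comm]; exact hag k hk, Or.inl ⟨rfl, ?_⟩⟩
        have h3 := seqLt_of_not_of_lt (h2 (q * N)) hupp
        rw [← seqLt_shiftn_of_agree (n := N) (fun j hj => by
          rw [hag j hj, phiInf_apply_zero _ hj]; rfl), shiftn_phiInf_headSeq hN,
          phiInf_one h, hsh] at h3
        exact h3
  choose! f hf using hstep
  let c : ℕ → ℕ := fun q => Nat.rec 1 f q
  have hI : ∀ q, Inv q (c q) := by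
    intro q
    induction q with
    | zero => exact Or.inl ⟨rfl, by simpa using hy⟩
    | succ q ih => exact (hf q (c q) ih).2
  refine ⟨c, rfl, fun i => ?_, ?_⟩
  · rcases hI i with ⟨hc, -⟩ | ⟨hc, -⟩ <;> omega
  · funext n
    have h3 := (hf (n / N) (c (n / N)) (hI _)).1 (n % N) (Nat.mod_lt _ hN)
    rw [Nat.div_add_mod'] at h3
    exact h3

theorem not_seqLt_tail_of_zero {x : ℕ → ℕ} (h0 : x 0 = 0) : ¬ seqLt (shiftn 1 x) x := by
  rintro ⟨k, h1, h2⟩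
  have h3 : ∀ i ≤ k, x i = 0 := by
    intro i
    induction i with
    | zero => exact fun _ => h0
    | succ i ih => exact fun hi => (h1 i (by omega)).trans (ih (by omega))
  rw [h3 k le_rfl] at h2
  omega

theorem not_seqLt_tail_of_one {x : ℕ → ℕ} (hx : ∀ i, x i ≤ 1) (h0 : x 0 = 1) :
    ¬ seqLt x (shiftn 1 x) := by
  rintro ⟨k, h1, h2⟩
  have h3 : ∀ i ≤ k, x i = 1 := by
    intro i
    induction i with
    | zero => exact fun _ => h0
    | succ i ih => exact fun hi => (h1 i (by omega)).symm.trans (ih (by omega))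
  rw [h3 k le_rfl] at h2
  have := hx (k + 1)
  simp only [shiftn_apply] at h2
  omega

theorem ForcesEvPer.renormalize (h : LyndonPair N a b) (hQ : ForcesEvPer a b)
    (hr : BinaryPair M r l) (hQr : ForcesEvPer r l) :
    ForcesEvPer (phiInf N a b (shiftn (M - 1) r)) (phiInf N a b (shiftn (M - 1) l)) := by
  intro d h1 h2
  have hN := h.pos
  have hR0 := hr.pred_left_zero
  have hL0 := hr.pred_right_zero
  by_cases H : ∀ i, ¬ seqLt (shiftn i d) a
  · refine ForcesEvPer.relax h hQ H fun i hlt => h2 i (seqLt_trans ?_ hlt)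
    refine phiInf_lt h (by rw [hL0]; rfl) (fun i => ?_) ?_
    · rcases i with _ | i <;> simp
    · rw [hr.shiftn_pred_right]
      exact hr.lt_one
  push Not at H
  obtain ⟨i, hi⟩ := H
  refine EvPer.of_shiftn (m := i) ?_
  have h1' : ∀ j, ¬ seqLt (shiftn j (shiftn i d)) (phiInf N a b (shiftn (M - 1) r)) := by
    intro j; rw [shiftn_shiftn]; exact h1 _
  have h2' : ∀ j, ¬ seqLt (phiInf N a b (shiftn (M - 1) l)) (shiftn j (shiftn i d)) := by
    intro j; rw [shiftn_shiftn]; exact h2 _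
  obtain ⟨c, hc0, hc1, hc⟩ := exists_eq_phiInf h hr h1' h2' hi
  rw [hc] at h1' h2' ⊢
  refine EvPer.phiInf hN ?_
  have hbin : ∀ q, c q = 0 ∨ c q = 1 := fun q => by have := hc1 q; omega
  have hlow : ∀ q, ¬ seqLt (shiftn (q + 1) c) r := by
    intro q
    induction q with
    | zero =>
      intro hlt
      refine h1' (0 * N) ?_
      rw [shiftn_phiInf hN]
      refine phiInf_lt h (by rw [hR0]; simpa using hc0) (fun i => hr.le_one _) ?_
      rwa [hr.shiftn_pred_left]
    | succ q ih =>
      intro hlt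
      rcases hbin (q + 1) with h0 | h0
      · refine not_seqLt_trans ih ?_ hlt
        have := not_seqLt_tail_of_zero (x := shiftn (q + 1) c) (by simpa using h0)
        rwa [shiftn_shiftn] at this
      · refine h1' ((q + 1) * N) ?_
        rw [shiftn_phiInf hN]
        refine phiInf_lt h (by rw [hR0]; simpa using h0) (fun i => hr.le_one _) ?_
        rwa [hr.shiftn_pred_left, shiftn_shiftn]
  by_cases hz : ∃ q, c q = 0
  · obtain ⟨q₀, hq₀⟩ := hz
    have hupp0 : ∀ q, c q = 0 → ¬ seqLt l (shiftn (q + 1) c) := by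
      intro q h0 hlt
      refine h2' (q * N) ?_
      rw [shiftn_phiInf hN]
      refine phiInf_lt h (by rw [hL0]; simpa using h0.symm) (fun i => hc1 _) ?_
      rwa [hr.shiftn_pred_right, shiftn_shiftn]
    have hupp : ∀ q, ¬ seqLt l (shiftn (q₀ + q + 1) c) := by
      intro q
      induction q with
      | zero => exact hupp0 q₀ hq₀
      | succ q ih =>
        rcases hbin (q₀ + q + 1) with h0 | h0
        · exact hupp0 _ h0
        · refine not_seqLt_trans ?_ ih
          have := not_seqLt_tail_of_one (x := shiftn (q₀ + q + 1) c) (fun i => hc1 _)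
            (by simpa using h0)
          rwa [shiftn_shiftn] at this
    refine EvPer.of_shiftn (m := q₀ + 1) (hQr _ (fun j => ?_) fun j => ?_)
    · rw [shiftn_shiftn, add_right_comm]; exact hlow _
    · rw [shiftn_shiftn, add_right_comm]; exact hupp _
  · push Not at hz
    refine evPer_of_periodic one_pos fun k => ?_
    have := hbin k
    have := hbin (k + 1)
    have := hz k
    have := hz (k + 1)
    omega

end renormalize

/-! ### Mechanical sequences and Farey words -/

/-- The mechanical sequence of slope `p / q` and intercept `x / q`. -/
def mech (p q x k : ℕ) : ℕ := ((k + 1) * p + x) / q - (k * p + x) / q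

section mech

variable {p q : ℕ}

theorem mech_mono (p q x k : ℕ) : (k * p + x) / q ≤ ((k + 1) * p + x) / q :=
  Nat.div_le_div_right (by rw [add_mul]; omega)

theorem shiftn_mech (hq : 0 < q) (x i : ℕ) :
    shiftn i (mech p q x) = mech p q ((i * p + x) % q) := by
  have key : ∀ k, ((k + i) * p + x) / q = (k * p + (i * p + x) % q) / q + (i * p + x) / q := by
    intro k
    rw [← Nat.add_mul_div_right _ _ hq, add_assoc, Nat.mod_add_div', add_mul, add_assoc]
  funext k
  simp only [shiftn_apply, mech]
  rw [key, show k + i + 1 = k + 1 + i by ring, key]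
  omega

theorem mech_lt (hpq : p.Coprime q) {x y : ℕ} (hxy : x < y) (hy : y < q) :
    seqLt (mech p q x) (mech p q y) := by
  have hq : 0 < q := by omega
  have hle : ∀ n, (n * p + x) / q ≤ (n * p + y) / q := fun n => Nat.div_le_div_right (by omega)
  have hex : ∃ n, (n * p + x) / q < (n * p + y) / q := by
    obtain ⟨n, hn⟩ : ∃ n, (n * p + y) % q = 0 := by
      obtain ⟨n, -, hn⟩ := Nat.exists_mul_mod_eq_of_coprime (q - y) hpq hq.ne'
      refine ⟨n, ?_⟩
      rw [mul_comm, Nat.add_mod, hn, ← Nat.add_mod, Nat.sub_add_cancel hy.le, Nat.mod_self]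
    refine ⟨n, ?_⟩
    rw [Nat.div_lt_iff_lt_mul hq, Nat.div_mul_cancel (Nat.dvd_of_mod_eq_zero hn)]
    omega
  classical
  have hmin : ∀ m < Nat.find hex, (m * p + x) / q = (m * p + y) / q := fun m hm =>
    le_antisymm (hle m) (not_lt.mp (Nat.find_min hex hm))
  have hlt := Nat.find_spec hex
  obtain ⟨n, hn⟩ : ∃ n, Nat.find hex = n + 1 := by
    refine Nat.exists_eq_succ_of_ne_zero fun h0 => ?_
    simp [h0, Nat.div_eq_of_lt hy] at hlt
  rw [hn] at hmin hlt
  refine ⟨n, fun i hi => ?_, ?_⟩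
  · rw [mech, mech, hmin i (by omega), hmin (i + 1) (by omega)]
  · have := mech_mono p q x n
    rw [mech, mech, ← hmin n (by omega)]
    omega

theorem mech_zero_apply_pred (hp : 0 < p) (hq : 0 < q) : 1 ≤ mech p q 0 (q - 1) := by
  have h1 : (q - 1 + 1) * p / q = p := by
    rw [show q - 1 + 1 = q by omega]; exact Nat.mul_div_cancel_left p hq
  have h2 : (q - 1) * p / q < p := by
    rw [Nat.div_lt_iff_lt_mul hq, mul_comm p q]
    exact Nat.mul_lt_mul_of_pos_right (by omega) hp
  simp only [mech, add_zero]
  omega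

theorem mech_lyndonPair (hpq : p.Coprime q) (hp : 0 < p) (hq : 0 < q) :
    LyndonPair q (mech p q 0) (mech p q (q - 1)) := by
  refine ⟨hq, fun k => ?_, ?_, mech_zero_apply_pred hp hq, fun i hi hiq => ?_, fun i => ?_⟩
  · have h1 := congrFun (shiftn_mech (p := p) hq 0 q) k
    simpa using h1
  · obtain ⟨j, hj⟩ : ∃ j, (j * p + 0) % q = q - 1 := by
      obtain ⟨j, -, hj⟩ := Nat.exists_mul_mod_eq_of_coprime (q - 1) hpq hq.ne'
      exact ⟨j, by rw [add_zero, mul_comm, hj, Nat.mod_eq_of_lt (by omega)]⟩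
    exact ⟨j, by rw [shiftn_mech hq, hj]⟩
  · rw [shiftn_mech hq]
    refine mech_lt hpq (Nat.pos_of_ne_zero fun h0 => ?_) (Nat.mod_lt _ hq)
    have h1 : q ∣ i := hpq.symm.dvd_of_dvd_mul_right (Nat.dvd_of_mod_eq_zero (by simpa using h0))
    exact absurd (Nat.le_of_dvd hi h1) (by omega)
  · rw [shiftn_mech hq]
    have h1 := Nat.mod_lt (i * p + 0) hq
    rcases (show (i * p + 0) % q < q - 1 ∨ (i * p + 0) % q = q - 1 by omega) with h2 | h2
    · exact seqLt_asymm (mech_lt hpq h2 (by omega))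
    · rw [h2]; exact seqLt_irrefl _

theorem mech_binaryPair (hpq : p.Coprime q) (hp : 0 < p) (h : p < q) :
    BinaryPair q (mech p q 0) (mech p q (q - 1)) := by
  have hq : 0 < q := by omega
  refine ⟨mech_lyndonPair hpq hp hq, fun i => ?_, ?_, ?_⟩
  · have h1 : ((i + 1) * p + 0) / q ≤ (i * p + 0) / q + 1 := by
      rw [← Nat.add_div_right _ hq]
      exact Nat.div_le_div_right (by rw [add_mul]; omega)
    rw [mech]; omega
  · simp [mech, Nat.div_eq_of_lt h]
  · have h1 : ((q - 1 + 1) * p + (q - 1)) / q = p := by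
      rw [show q - 1 + 1 = q by omega, Nat.mul_add_div hq, Nat.div_eq_of_lt (by omega), add_zero]
    have h2 : ((q - 1) * p + (q - 1)) / q = p := by
      rw [show (q - 1) * p + (q - 1) = q * p + (q - 1 - p) by
        obtain ⟨t, rfl⟩ : ∃ t, q = p + 1 + t := ⟨q - (p + 1), by omega⟩
        rw [show p + 1 + t - 1 = p + t by omega, show p + t - p = t by omega]
        ring, Nat.mul_add_div hq, Nat.div_eq_of_lt (by omega), add_zero]
    rw [mech, h1, h2, Nat.sub_self]

theorem sum_mech {x : ℕ} (hx : x < q) (n : ℕ) :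
    ∑ k ∈ Finset.range n, mech p q x k = (n * p + x) / q := by
  induction n with
  | zero => simp [Nat.div_eq_of_lt hx]
  | succ n ih =>
    have := mech_mono p q x n
    rw [Finset.sum_range_succ, ih, mech]
    omega

theorem sum_shiftn_split (d : ℕ → ℕ) (i : ℕ) {m n : ℕ} (h : m ≤ n) :
    ∑ k ∈ Finset.range n, shiftn i d k =
      ∑ k ∈ Finset.range m, shiftn i d k + ∑ k ∈ Finset.range (n - m), shiftn (i + m) d k := by
  obtain ⟨t, rfl⟩ := Nat.exists_eq_add_of_le h
  rw [Finset.sum_range_add, Nat.add_sub_cancel_left]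
  simp only [shiftn_apply]
  congr 1
  exact Finset.sum_congr rfl fun k _ => by congr 1; ring

/-- Two sequences with equal partial sums before `n` and different partial sums at `n` are
ordered as their `n`-th partial sums. -/
theorem seqLt_of_sum {x y : ℕ → ℕ} {n : ℕ}
    (h : ∀ m < n, ∑ k ∈ Finset.range m, x k = ∑ k ∈ Finset.range m, y k)
    (hn : ∑ k ∈ Finset.range n, x k < ∑ k ∈ Finset.range n, y k) : seqLt x y := by
  rcases n with _ | n
  · simp at hn
  rw [Finset.sum_range_succ, Finset.sum_range_succ, h n (by omega)] at hn
  refine ⟨n, fun i hi => ?_, by omega⟩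
  have h1 := h (i + 1) (by omega)
  rw [Finset.sum_range_succ, Finset.sum_range_succ, h i (by omega)] at h1
  omega

theorem mech_forcesEvPer (hq : 0 < q) : ForcesEvPer (mech p q 0) (mech p q (q - 1)) := by
  intro d hlow hupp
  have low : ∀ n i, n * p / q ≤ ∑ k ∈ Finset.range n, shiftn i d k := by
    intro n
    induction n using Nat.strong_induction_on with
    | _ n ih =>
      intro i
      by_contra hc
      refine hlow i (seqLt_of_sum (n := n) (fun m hm => ?_) (by
        rw [sum_mech hq, add_zero]; omega))
      rw [sum_mech hq, add_zero]
      have h1 := ih m hm i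
      by_contra hne
      rcases Nat.eq_zero_or_pos m with rfl | hm0
      · simp at hne
      have h2 := ih (n - m) (by omega) (i + m)
      rw [sum_shiftn_split d i hm.le] at hc
      have h3 : n * p / q ≤ m * p / q + (n - m) * p / q + 1 := by
        have h4 : n * p = m * p + (n - m) * p := by rw [← add_mul, Nat.add_sub_cancel' hm.le]
        have h5 := Nat.div_add_mod (m * p) q
        have h6 := Nat.div_add_mod ((n - m) * p) q
        have h7 := Nat.mod_lt (m * p) hq
        have h8 := Nat.mod_lt ((n - m) * p) hq
        rw [← Nat.lt_succ_iff, Nat.div_lt_iff_lt_mul hq]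
        nlinarith
      omega
  have upp : ∀ n i, ∑ k ∈ Finset.range n, shiftn i d k ≤ (n * p + (q - 1)) / q := by
    intro n
    induction n using Nat.strong_induction_on with
    | _ n ih =>
      intro i
      by_contra hc
      refine hupp i (seqLt_of_sum (n := n) (fun m hm => ?_) (by
        rw [sum_mech (by omega)]; omega))
      rw [sum_mech (by omega)]
      have h1 := ih m hm i
      by_contra hne
      rcases Nat.eq_zero_or_pos m with rfl | hm0
      · simp at hne
      have h2 := ih (n - m) (by omega) (i + m)
      rw [sum_shiftn_split d i hm.le] at hc
      have h3 : (m * p + (q - 1)) / q + ((n - m) * p + (q - 1)) / q ≤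
          (n * p + (q - 1)) / q + 1 := by
        have h4 : n * p = m * p + (n - m) * p := by rw [← add_mul, Nat.add_sub_cancel' hm.le]
        have h5 := Nat.div_mul_le_self (m * p + (q - 1)) q
        have h6 := Nat.div_mul_le_self ((n - m) * p + (q - 1)) q
        rw [← Nat.add_div_right _ hq, Nat.le_div_iff_mul_le hq, add_mul]
        omega
      omega
  have hsum : ∀ i, ∑ k ∈ Finset.range q, shiftn i d k = p := by
    intro i
    have h1 := low q i
    have h2 := upp q i
    rw [Nat.mul_div_cancel_left p hq] at h1
    rw [Nat.mul_add_div hq, Nat.div_eq_of_lt (by omega)] at h2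
    omega
  refine evPer_of_periodic hq fun k => ?_
  have h1 := sum_shiftn_split d k (m := 1) (n := q + 1) (by omega)
  rw [Finset.sum_range_succ, hsum, Nat.add_sub_cancel, hsum] at h1
  simp only [shiftn_apply, Finset.sum_range_one, zero_add] at h1
  rw [add_comm k q]
  omega

end mech

/-- A word is Christoffel if its partial sums are the integer parts of the multiples of its
slope `w.sum / w.length`, in lowest terms. -/
structure IsChristoffel (w : List ℕ) : Prop where
  pos : 0 < w.length
  coprime : w.sum.Coprime w.length
  sum_take : ∀ k ≤ w.length, (w.take k).sum = k * w.sum / w.length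

namespace IsChristoffel

theorem perSeq_eq {w : List ℕ} (h : IsChristoffel w) :
    perSeq w = mech w.sum w.length 0 := by
  have h0 : ∀ k < w.length, w.getD k 0 = mech w.sum w.length 0 k := by
    intro k hk
    have h1 := h.sum_take (k + 1) hk
    rw [List.sum_take_succ _ _ hk, h.sum_take k hk.le] at h1
    rw [List.getD_eq_getElem _ _ hk]
    simp only [mech, add_zero]
    omega
  funext k
  have h1 := congrFun (shiftn_mech (p := w.sum) h.pos 0 (k / w.length * w.length)) (k % w.length)
  rw [shiftn_apply, Nat.mod_add_div'] at h1
  rw [h1, perSeq, h0 _ (Nat.mod_lt _ h.pos)]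
  congr 1
  rw [add_zero, mul_assoc, mul_left_comm, Nat.mul_mod_right]

theorem append {u v : List ℕ} (hu : IsChristoffel u) (hv : IsChristoffel v)
    (h : v.sum * u.length = u.sum * v.length + 1) : IsChristoffel (u ++ v) := by
  have hup := hu.pos
  have hvp := hv.pos
  refine ⟨by simp; omega, ?_, fun k hk => ?_⟩
  · rw [List.sum_append, List.length_append]
    refine Nat.Coprime.symm ?_
    rw [← Nat.isCoprime_iff_coprime]
    refine ⟨-u.sum, u.length, ?_⟩
    have h' : (v.sum * u.length : ℤ) = u.sum * v.length + 1 := by exact_mod_cast h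
    rw [Nat.cast_add, Nat.cast_add]
    linear_combination h'
  · rw [List.length_append] at hk ⊢
    rw [List.take_append, List.sum_append, List.sum_append]
    rcases le_total k u.length with hku | hku
    · rw [Nat.sub_eq_zero_of_le hku, List.take_zero, List.sum_nil, add_zero, hu.sum_take k hku]
      have h1 := Nat.div_add_mod (k * u.sum) u.length
      have h2 := Nat.mod_lt (k * u.sum) hup
      set m := k * u.sum / u.length
      set x := k * u.sum % u.length
      have h3 : u.length * (k * (u.sum + v.sum)) =
          (u.length + v.length) * (u.length * m + x) + k := by
        rw [h1]; linear_combination k * h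
      refine (Nat.div_eq_of_lt_le ?_ ?_).symm
      · refine Nat.le_of_mul_le_mul_left ?_ hup
        rw [h3]
        nlinarith [Nat.zero_le ((u.length + v.length) * x)]
      · refine Nat.lt_of_mul_lt_mul_left (a := u.length) ?_
        rw [h3]
        nlinarith [Nat.mul_le_mul_left (u.length + v.length) (Nat.succ_le_of_lt h2)]
    · obtain ⟨j, rfl⟩ := Nat.exists_eq_add_of_le hku
      have hj : j ≤ v.length := by omega
      rw [Nat.add_sub_cancel_left, List.take_of_length_le hku, hv.sum_take j hj]
      have h1 := Nat.div_add_mod (j * v.sum) v.length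
      have h2 := Nat.mod_lt (j * v.sum) hvp
      set m := j * v.sum / v.length
      set x := j * v.sum % v.length
      have h3 : v.length * ((u.length + j) * (u.sum + v.sum)) + j =
          (u.length + v.length) * (v.length * (u.sum + m) + x) + v.length := by
        rw [mul_add v.length, add_assoc (v.length * u.sum), h1]
        linear_combination v.length * h + j * h.symm
      refine (Nat.div_eq_of_lt_le ?_ ?_).symm
      · refine Nat.le_of_mul_le_mul_left ?_ hvp
        nlinarith [Nat.zero_le ((u.length + v.length) * x)]
      · refine Nat.lt_of_mul_lt_mul_left (a := v.length) ?_
        nlinarith [Nat.mul_le_mul_left (u.length + v.length) (Nat.succ_le_of_lt h2)]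

theorem theta {w : List ℕ} (h : IsChristoffel w) : IsChristoffel (theta w) := by
  have hs : ∀ v : List ℕ, (_root_.theta v).sum = v.sum + v.length := by
    intro v
    simp [_root_.theta, List.sum_map_add]
  have hl : (_root_.theta w).length = w.length := by simp [_root_.theta]
  refine ⟨by rw [hl]; exact h.pos, ?_, fun k hk => ?_⟩
  · rw [hs, hl]; simpa using h.coprime
  · rw [hl] at hk
    have : (_root_.theta w).take k = _root_.theta (w.take k) := by simp [_root_.theta]
    rw [this, hs, hs, hl, h.sum_take k hk, mul_add, Nat.add_mul_div_right _ _ h.pos,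
      List.length_take, min_eq_left hk]

end IsChristoffel

theorem mem_fareyInsert_cons (v : List ℕ) (rest : List (List ℕ)) :
    ∃ l, fareyInsert (v :: rest) = v :: l := by
  rcases rest with _ | ⟨u, rest⟩
  · exact ⟨[], rfl⟩
  · exact ⟨_, rfl⟩

/-- Consecutive Farey words are Farey neighbours. -/
def FareyAdj (u v : List ℕ) : Prop := v.sum * u.length = u.sum * v.length + 1

theorem fareyInsert_spec : ∀ F : List (List ℕ), F.IsChain FareyAdj →
    (∀ w ∈ F, IsChristoffel w ∧ w.sum ≤ w.length) →
    (fareyInsert F).IsChain FareyAdj ∧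
      ∀ w ∈ fareyInsert F, IsChristoffel w ∧ w.sum ≤ w.length
  | [], _, _ => by simp [fareyInsert]
  | [w], _, h => by simpa [fareyInsert] using h
  | w :: v :: rest, hc, h => by
    rw [List.isChain_cons_cons] at hc
    have ih := fareyInsert_spec (v :: rest) hc.2 fun x hx => h x (List.mem_cons_of_mem _ hx)
    have hw := h w (by simp)
    have hv := h v (by simp)
    have hadj : v.sum * w.length = w.sum * v.length + 1 := hc.1
    obtain ⟨l, hl⟩ := mem_fareyInsert_cons v rest
    rw [fareyInsert]
    refine ⟨?_, ?_⟩
    · rw [List.isChain_cons_cons]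
      refine ⟨?_, ?_⟩
      · simp only [FareyAdj, List.sum_append, List.length_append]
        linear_combination hadj
      · rw [hl, List.isChain_cons_cons, ← hl]
        refine ⟨?_, ih.1⟩
        simp only [FareyAdj, List.sum_append, List.length_append]
        linear_combination hadj
    · intro x hx
      rw [List.mem_cons, List.mem_cons] at hx
      rcases hx with rfl | rfl | hx
      · exact hw
      · refine ⟨hw.1.append hv.1 hadj, ?_⟩
        simp only [List.sum_append, List.length_append]
        omega
      · exact ih.2 x hx

theorem isChristoffel_singleton (d : ℕ) : IsChristoffel [d] := by
  refine ⟨by simp, by simp, fun k hk => ?_⟩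
  rcases k with _ | _ | k
  · simp
  · simp
  · simp at hk

theorem fareyLevel_spec (n : ℕ) : (fareyLevel n).IsChain FareyAdj ∧
    ∀ w ∈ fareyLevel n, IsChristoffel w ∧ w.sum ≤ w.length := by
  induction n with
  | zero =>
    refine ⟨by simp [fareyLevel, FareyAdj], fun w hw => ?_⟩
    simp only [fareyLevel, List.mem_cons, List.not_mem_nil, or_false] at hw
    rcases hw with rfl | rfl
    exacts [⟨isChristoffel_singleton 0, by simp⟩, ⟨isChristoffel_singleton 1, by simp⟩]
  | succ n ih => exact fareyInsert_spec _ ih.1 ih.2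

theorem FareySet_spec {w : List ℕ} (h : w ∈ FareySet) :
    IsChristoffel w ∧ 0 < w.sum ∧ w.sum < w.length := by
  obtain ⟨⟨n, hn⟩, h0, h1⟩ := h
  obtain ⟨hw, hle⟩ := (fareyLevel_spec n).2 w hn
  have hcop := hw.coprime
  have key : w.length = 1 → w = [w.sum] := by
    intro hl
    obtain ⟨d, rfl⟩ := List.length_eq_one_iff.mp hl
    simp
  refine ⟨hw, Nat.pos_of_ne_zero fun hs => h0 ?_, lt_of_le_of_ne hle fun hs => h1 ?_⟩
  · rw [hs, Nat.coprime_zero_left] at hcop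
    rw [key hcop, hs]
  · rw [hs, Nat.coprime_self] at hcop
    rw [key hcop, hs, hcop]

theorem FareyExt_spec {w : List ℕ} (h : w ∈ FareyExt) : IsChristoffel w ∧ 0 < w.sum := by
  obtain ⟨v, hv, k, rfl⟩ := h
  have hv' : IsChristoffel v ∧ 0 < v.sum := by
    rcases hv with hv | hv
    · exact ⟨(FareySet_spec hv).1, (FareySet_spec hv).2.1⟩
    · rw [mem_singleton_iff] at hv
      subst hv
      exact ⟨isChristoffel_singleton 1, by simp⟩
  induction k with
  | zero => exact hv'
  | succ k ih =>
    rw [Function.iterate_succ_apply']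
    refine ⟨ih.1.theta, ?_⟩
    have := ih.2
    simp only [theta, List.sum_map_add, List.map_id', List.map_const', List.sum_replicate]
    omega

/-! ### Words -/

theorem perSeq_apply {w : List ℕ} {k : ℕ} (hk : k < w.length) : perSeq w k = w.getD k 0 := by
  rw [perSeq, Nat.mod_eq_of_lt hk]

theorem perSeq_rotate {w : List ℕ} (hw : 0 < w.length) (i : ℕ) :
    perSeq (w.rotate i) = shiftn i (perSeq w) := by
  funext k
  have h1 : k % w.length < w.length := Nat.mod_lt _ hw
  rw [shiftn_apply, perSeq, perSeq, List.length_rotate,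
    List.getD_eq_getElem _ _ (by rwa [List.length_rotate]), List.getElem_rotate,
    List.getD_eq_getElem _ _ (Nat.mod_lt _ hw)]
  simp

theorem le_foldl_max {α : Type*} [LinearOrder α] (l : List α) (x : α) :
    x ≤ l.foldl max x ∧ (∀ y ∈ l, y ≤ l.foldl max x) ∧ (l.foldl max x = x ∨ l.foldl max x ∈ l) := by
  induction l generalizing x with
  | nil => simp
  | cons z l ih =>
    obtain ⟨h1, h2, h3⟩ := ih (max x z)
    simp only [List.foldl_cons, List.mem_cons]
    refine ⟨(le_max_left _ _).trans h1, ?_, ?_⟩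
    · rintro y (rfl | hy)
      · exact (le_max_right _ _).trans h1
      · exact h2 y hy
    · rcases h3 with h3 | h3
      · rcases max_choice x z with h4 | h4
        · exact Or.inl (h3.trans h4)
        · exact Or.inr (Or.inl (h3.trans h4))
      · exact Or.inr (Or.inr h3)

theorem maxCyc_spec {w : List ℕ} {b : ℕ → ℕ} (h : LyndonPair w.length (perSeq w) b) :
    (maxCyc w).length = w.length ∧ perSeq (maxCyc w) = b := by
  have hN := h.pos
  obtain ⟨j, hj⟩ := h.rot
  rw [h.shiftn_mod, ← perSeq_rotate hN] at hj
  obtain ⟨-, h2, h3⟩ := le_foldl_max ((List.range w.length).map w.rotate) []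
  have hu := h2 (w.rotate (j % w.length))
    (List.mem_map.mpr ⟨_, List.mem_range.mpr (Nat.mod_lt _ hN), rfl⟩)
  rw [← maxCyc] at hu h3
  obtain ⟨i, hi⟩ : ∃ i, w.rotate i = maxCyc w := by
    rcases h3 with h3 | h3
    · exfalso
      rw [h3] at hu
      have h4 : w.rotate (j % w.length) = [] := by
        rcases hx : w.rotate (j % w.length) with _ | ⟨x, l⟩
        · rfl
        · rw [hx] at hu
          exact absurd (List.nil_lt_cons x l) (not_lt.mpr hu)
      rw [List.rotate_eq_nil_iff] at h4
      simp [h4] at hN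
    · obtain ⟨i, -, hi⟩ := List.mem_map.mp h3
      exact ⟨i, hi⟩
  have hlen : (maxCyc w).length = w.length := by rw [← hi, List.length_rotate]
  refine ⟨hlen, ?_⟩
  rcases hu.eq_or_lt with heq | hlt
  · rw [← heq, hj]
  · exfalso
    rcases List.lt_iff_exists.mp hlt with ⟨-, h4⟩ | ⟨k, hk1, hk2, h4, h5⟩
    · rw [hlen, List.length_rotate] at h4
      exact lt_irrefl _ h4
    · refine h.max i ⟨k, fun m hm => ?_, ?_⟩
      · rw [hj, ← perSeq_rotate hN, hi, perSeq_apply (hm.trans hk1), perSeq_apply (hm.trans hk2),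
          List.getD_eq_getElem _ _ (hm.trans hk1), List.getD_eq_getElem _ _ (hm.trans hk2)]
        exact h4 m hm
      · rw [hj, ← perSeq_rotate hN, hi, perSeq_apply hk1, perSeq_apply hk2,
          List.getD_eq_getElem _ _ hk1, List.getD_eq_getElem _ _ hk2]
        exact h5

theorem getLast!_eq_getD {w : List ℕ} (hw : w ≠ []) : w.getLast! = w.getD (w.length - 1) 0 := by
  obtain ⟨l, x, rfl⟩ := w.eq_nil_or_concat.resolve_left hw
  simp

theorem getD_dropLast_append {w : List ℕ} (hw : w ≠ []) (x : ℕ) {k : ℕ} (hk : k < w.length) :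
    (w.dropLast ++ [x]).getD k 0 = if k + 1 = w.length then x else w.getD k 0 := by
  obtain ⟨l, y, rfl⟩ := w.eq_nil_or_concat.resolve_left hw
  simp only [List.concat_eq_append, List.length_append, List.length_singleton] at hk
  rcases (show k < l.length ∨ k = l.length by omega) with h | rfl
  · simp [h, h.ne, List.getElem?_append]
  · simp

theorem length_wplus {w : List ℕ} (hw : w ≠ []) : (wplus w).length = w.length := by
  have := List.length_pos_of_ne_nil hw
  simp [wplus]; omega

theorem length_wminus {w : List ℕ} (hw : w ≠ []) : (wminus w).length = w.length := by
  have := List.length_pos_of_ne_nil hw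
  simp [wminus]; omega

theorem getD_wplus {w : List ℕ} (hw : w ≠ []) {k : ℕ} (hk : k < w.length) :
    (wplus w).getD k 0 = if k + 1 = w.length then w.getD k 0 + 1 else w.getD k 0 := by
  rw [wplus, getD_dropLast_append hw _ hk, getLast!_eq_getD hw]
  split_ifs with h
  · rw [show w.length - 1 = k by omega]
  · rfl

theorem getD_wminus {w : List ℕ} (hw : w ≠ []) {k : ℕ} (hk : k < w.length) :
    (wminus w).getD k 0 = if k + 1 = w.length then w.getD k 0 - 1 else w.getD k 0 := by
  rw [wminus, getD_dropLast_append hw _ hk, getLast!_eq_getD hw]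
  split_ifs with h
  · rw [show w.length - 1 = k by omega]
  · rfl

section subst

variable {w : List ℕ} {b : ℕ → ℕ}

theorem ne_nil_of_lyndonPair (h : LyndonPair w.length (perSeq w) b) : w ≠ [] ∧ maxCyc w ≠ [] := by
  have hN := h.pos
  refine ⟨List.ne_nil_of_length_pos hN, List.ne_nil_of_length_pos ?_⟩
  rwa [(maxCyc_spec h).1]

theorem length_phiBlock (h : LyndonPair w.length (perSeq w) b) (p d : ℕ) :
    (phiBlock w p d).length = w.length := by
  have h1 := (maxCyc_spec h).1
  obtain ⟨hw, hm⟩ := ne_nil_of_lyndonPair h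
  rw [phiBlock]
  split_ifs <;> simp [h1, length_wplus hm, length_wminus hw]

theorem getD_phiBlock (h : LyndonPair w.length (perSeq w) b) (p d : ℕ) {k : ℕ}
    (hk : k < w.length) : (phiBlock w p d).getD k 0 = blk w.length (perSeq w) b p d k := by
  obtain ⟨h1, h2⟩ := maxCyc_spec h
  obtain ⟨hw, hm⟩ := ne_nil_of_lyndonPair h
  have hk' : k < (maxCyc w).length := by rwa [h1]
  rw [phiBlock, blk, ← h2, perSeq_apply hk, perSeq_apply hk']
  split_ifs <;> simp_all only [getD_wplus, getD_wminus, ne_eq,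
    not_false_eq_true, if_true, if_false]

theorem length_phiAux (h : LyndonPair w.length (perSeq w) b) (r : List ℕ) (p : ℕ) :
    (phiAux w p r).length = w.length * r.length := by
  induction r generalizing p with
  | nil => rfl
  | cons d r ih =>
    rw [phiAux, List.length_append, length_phiBlock h, ih, List.length_cons]
    ring

theorem getD_phiAux (h : LyndonPair w.length (perSeq w) b) (r : List ℕ) (p : ℕ) {q k : ℕ}
    (hq : q < r.length) (hk : k < w.length) :
    (phiAux w p r).getD (q * w.length + k) 0 =
      blk w.length (perSeq w) b ((p :: r).getD q 0) (r.getD q 0) k := by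
  induction r generalizing p q with
  | nil => simp at hq
  | cons d r ih =>
    rw [phiAux]
    rcases q with _ | q
    · rw [zero_mul, zero_add, List.getD_append _ _ _ _ (by rwa [length_phiBlock h]),
        getD_phiBlock h _ _ hk]
      rfl
    · have h1 : (q + 1) * w.length + k = w.length + (q * w.length + k) := by ring
      rw [List.getD_append_right _ _ _ _ (by rw [length_phiBlock h]; omega), length_phiBlock h, h1,
        Nat.add_sub_cancel_left, ih d (by simpa using hq)]
      rfl

theorem subst_eq_phiAux (w : List ℕ) (d : ℕ) (r : List ℕ) :
    subst w (d :: r) = phiAux w (1 - d) (d :: r) := rfl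

theorem length_subst (h : LyndonPair w.length (perSeq w) b) (r : List ℕ) :
    (subst w r).length = w.length * r.length := by
  rcases r with _ | ⟨d, r⟩
  · rfl
  · rw [subst_eq_phiAux, length_phiAux h]

/-- The substitution on words corresponds to the substitution on the associated periodic
sequences. -/
theorem perSeq_subst (h : LyndonPair w.length (perSeq w) b) {r : List ℕ} {l : ℕ → ℕ}
    (hr : BinaryPair r.length (perSeq r) l) :
    perSeq (subst w r) = phiInf w.length (perSeq w) b (shiftn (r.length - 1) (perSeq r)) := by
  have hM := hr.pos
  have hN := h.pos
  have hren := h.renormalize hr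
  have key : ∀ n < (subst w r).length, (subst w r).getD n 0 =
      phiInf w.length (perSeq w) b (shiftn (r.length - 1) (perSeq r)) n := by
    intro n hn
    rw [length_subst h] at hn
    have hq : n / w.length < r.length := Nat.div_lt_of_lt_mul hn
    have hk := Nat.mod_lt n hN
    have hfirst := hr.first
    have hlast := hr.last_left
    have hpred := hr.shiftn_pred_left
    rcases r with _ | ⟨d, r⟩
    · simp at hM
    have hd : d = 0 := by simpa [perSeq_apply hM] using hfirst
    subst hd
    conv_lhs => rw [subst_eq_phiAux, ← Nat.div_add_mod' n w.length, getD_phiAux h _ _ hq hk]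
    rw [phiInf]
    congr 1
    · rcases hq' : n / w.length with _ | q
      · simp only [shiftn_apply, zero_add, hlast]
        rfl
      · rw [hq'] at hq
        have := congrFun hpred q
        rw [shiftn_apply] at this
        rw [this, perSeq_apply (by omega)]
        rfl
    · have := congrFun hpred (n / w.length)
      rw [shiftn_apply] at this
      rw [this, perSeq_apply hq]
  funext n
  have hL : 0 < (subst w r).length := by rw [length_subst h]; exact hren.pos
  have h1 := congrFun (shiftn_mul_of_periodic hren.per (n / (subst w r).length))
    (n % (subst w r).length)
  rw [shiftn_apply, ← length_subst h, Nat.mod_add_div'] at h1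
  rw [h1, perSeq, key _ (Nat.mod_lt _ hL)]

theorem wordSeq_wplus_maxCyc (h : LyndonPair w.length (perSeq w) b) :
    wordSeq (wplus (maxCyc w)) (perSeq w) = phiInf w.length (perSeq w) b (headSeq 0 1) := by
  obtain ⟨hw, hm⟩ := ne_nil_of_lyndonPair h
  have hlen : (wplus (maxCyc w)).length = w.length := by
    rw [length_wplus hm, (maxCyc_spec h).1]
  funext n
  rw [wordSeq, hlen]
  split_ifs with hn
  · rw [phiInf_apply_zero _ hn, ← getD_phiBlock h _ _ hn]
    rfl
  · obtain ⟨m, rfl⟩ := Nat.exists_eq_add_of_le (not_lt.mp hn)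
    have h1 := congrFun (shiftn_phiInf_headSeq (a := perSeq w) (b := b) h.pos 0 1) m
    rw [phiInf_one h, shiftn_apply, add_comm m] at h1
    rw [h1, Nat.add_sub_cancel_left]

end subst

/-- The iterated product `s 0 • s 1 • … • s n`. -/
def iterSubst (s : ℕ → List ℕ) (n : ℕ) : List ℕ :=
  (List.ofFn fun i : Fin n => s (i + 1)).foldl subst (s 0)

theorem iterSubst_succ (s : ℕ → List ℕ) (n : ℕ) :
    iterSubst s (n + 1) = subst (iterSubst s n) (s (n + 1)) := by
  rw [iterSubst, List.ofFn_succ_last, List.foldl_append]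
  rfl

theorem FareySet_binaryPair {w : List ℕ} (h : w ∈ FareySet) :
    BinaryPair w.length (perSeq w) (mech w.sum w.length (w.length - 1)) ∧
      ForcesEvPer (perSeq w) (mech w.sum w.length (w.length - 1)) := by
  obtain ⟨h1, h2, h3⟩ := FareySet_spec h
  rw [h1.perSeq_eq]
  exact ⟨mech_binaryPair h1.coprime h2 h3, mech_forcesEvPer h1.pos⟩

section iterSubst

variable {s : ℕ → List ℕ}

theorem iterSubst_lyndonPair (h1 : s 0 ∈ FareyExt) (h2 : ∀ k, 1 ≤ k → s k ∈ FareySet) (n : ℕ) :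
    ∃ b, LyndonPair (iterSubst s n).length (perSeq (iterSubst s n)) b ∧
      ForcesEvPer (perSeq (iterSubst s n)) b := by
  induction n with
  | zero =>
    obtain ⟨h3, h4⟩ := FareyExt_spec h1
    change ∃ b, LyndonPair (s 0).length (perSeq (s 0)) b ∧ ForcesEvPer (perSeq (s 0)) b
    rw [h3.perSeq_eq]
    exact ⟨_, mech_lyndonPair h3.coprime h4 h3.pos, mech_forcesEvPer h3.pos⟩
  | succ n ih =>
    obtain ⟨b, hb, hQ⟩ := ih
    obtain ⟨hr, hQr⟩ := FareySet_binaryPair (h2 (n + 1) (by omega))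
    rw [iterSubst_succ, perSeq_subst hb hr, length_subst hb]
    exact ⟨_, hb.renormalize hr, ForcesEvPer.renormalize hb hQ hr hQr⟩

theorem le_length_iterSubst (h1 : s 0 ∈ FareyExt) (h2 : ∀ k, 1 ≤ k → s k ∈ FareySet) (n : ℕ) :
    n ≤ (iterSubst s n).length := by
  induction n with
  | zero => exact Nat.zero_le _
  | succ n ih =>
    obtain ⟨b, hb, -⟩ := iterSubst_lyndonPair h1 h2 n
    have hr := (FareySet_binaryPair (h2 (n + 1) (by omega))).1.two_le
    rw [iterSubst_succ, length_subst hb]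
    nlinarith [hb.pos]

end iterSubst

/-! ### Values of digit sequences -/

section values

variable {β : ℝ} {D : ℕ} {c : ℕ → ℕ}

theorem summable_bound (hβ : 1 < β) (D : ℕ) : Summable fun i : ℕ => (D : ℝ) / β ^ (i + 1) := by
  have h := (summable_geometric_of_lt_one (by positivity) (inv_lt_one_of_one_lt₀ hβ)).mul_left
    ((D : ℝ) / β)
  refine h.congr fun i => ?_
  rw [pow_succ, inv_pow]
  field_simp

theorem term_le_bound (hβ : 1 < β) (hc : ∀ i, c i ≤ D) (i : ℕ) :
    (c i : ℝ) / β ^ (i + 1) ≤ D / β ^ (i + 1) := by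
  have : (c i : ℝ) ≤ D := by exact_mod_cast hc i
  gcongr

theorem summable_digits (hβ : 1 < β) (hc : ∀ i, c i ≤ D) :
    Summable fun i : ℕ => (c i : ℝ) / β ^ (i + 1) :=
  Summable.of_nonneg_of_le (fun i => by positivity) (term_le_bound hβ hc) (summable_bound hβ D)

theorem valSeq_nonneg (hβ : 1 < β) (c : ℕ → ℕ) : 0 ≤ valSeq β c :=
  tsum_nonneg fun i => by positivity

theorem valSeq_split (hβ : 1 < β) (hc : ∀ i, c i ≤ D) (n : ℕ) :
    valSeq β c = ∑ i ∈ Finset.range n, (c i : ℝ) / β ^ (i + 1) + valSeq β (shiftn n c) / β ^ n := by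
  rw [valSeq, ← (summable_digits hβ hc).sum_add_tsum_nat_add n, valSeq, ← tsum_div_const]
  congr 1
  refine tsum_congr fun i => ?_
  rw [shiftn_apply, div_div, ← pow_add]
  congr 2
  ring

theorem valSeq_le_of_le (hβ : 1 < β) (hc : ∀ i, c i ≤ D) {c' : ℕ → ℕ} (h : ∀ i, c' i ≤ c i) :
    valSeq β c' ≤ valSeq β c :=
  (summable_digits hβ fun i => (h i).trans (hc i)).tsum_le_tsum (fun i => by
    have : (c' i : ℝ) ≤ c i := by exact_mod_cast h i
    gcongr) (summable_digits hβ hc)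

theorem le_valSeq (hβ : 1 < β) (hc : ∀ i, c i ≤ D) (i : ℕ) :
    (c i : ℝ) / β ^ (i + 1) ≤ valSeq β c :=
  (summable_digits hβ hc).le_tsum i fun j _ => by positivity

theorem valSeq_pos (hβ : 1 < β) (hc : ∀ i, c i ≤ D) {i : ℕ} (hi : 1 ≤ c i) : 0 < valSeq β c := by
  refine lt_of_lt_of_le ?_ (le_valSeq hβ hc i)
  have : (0 : ℝ) < c i := by exact_mod_cast hi
  positivity

theorem valSeq_antitone {β' : ℝ} (hβ : 1 < β) (hβ' : β ≤ β') (hc : ∀ i, c i ≤ D) :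
    valSeq β' c ≤ valSeq β c :=
  (summable_digits (hβ.trans_le hβ') hc).tsum_le_tsum (fun i => by gcongr) (summable_digits hβ hc)

theorem exists_base (hc : ∀ i, c i ≤ D) (hinf : ∀ n, ∃ i, n ≤ i ∧ 1 ≤ c i) :
    ∃ β : ℝ, 1 < β ∧ valSeq β c = 1 := by
  obtain ⟨n, hn⟩ : ∃ n, 2 ≤ ∑ i ∈ Finset.range n, c i := by
    obtain ⟨i, -, hi⟩ := hinf 0
    obtain ⟨j, hij, hj⟩ := hinf (i + 1)
    refine ⟨j + 1, ?_⟩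
    rw [Finset.sum_range_succ]
    have := Finset.single_le_sum (f := c) (fun k _ => Nat.zero_le _)
      (Finset.mem_range.mpr (show i < j by omega))
    omega
  have hn0 : n ≠ 0 := by rintro rfl; simp at hn
  set β₀ : ℝ := (2 : ℝ) ^ (1 / n : ℝ) with hβ₀
  have hpow : β₀ ^ n = 2 := by
    rw [hβ₀, ← Real.rpow_natCast, ← Real.rpow_mul (by norm_num), one_div,
      inv_mul_cancel₀ (by exact_mod_cast hn0), Real.rpow_one]
  have h1 : 1 < β₀ := Real.one_lt_rpow (by norm_num) (by positivity)
  have h2 : β₀ ≤ 2 := by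
    have := le_self_pow₀ h1.le hn0
    rwa [hpow] at this
  have hlow : 1 ≤ valSeq β₀ c := by
    rw [valSeq_split h1 hc n]
    have h3 : (1 : ℝ) ≤ ∑ i ∈ Finset.range n, (c i : ℝ) / β₀ ^ (i + 1) := by
      calc (1 : ℝ) = 2 / β₀ ^ n := by rw [hpow]; norm_num
        _ ≤ (∑ i ∈ Finset.range n, c i : ℕ) / β₀ ^ n := by
            have : (2 : ℝ) ≤ (∑ i ∈ Finset.range n, c i : ℕ) := by exact_mod_cast hn
            gcongr
        _ = ∑ i ∈ Finset.range n, (c i : ℝ) / β₀ ^ n := by rw [Nat.cast_sum, Finset.sum_div]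
        _ ≤ _ := by
            refine Finset.sum_le_sum fun i hi => ?_
            have := Finset.mem_range.mp hi
            gcongr
            · exact h1.le
            · omega
    have h4 := valSeq_nonneg h1 (shiftn n c)
    have : 0 ≤ valSeq β₀ (shiftn n c) / β₀ ^ n := by positivity
    linarith
  have hD : (0 : ℝ) ≤ D := Nat.cast_nonneg D
  have hupp : valSeq (D + 2) c ≤ 1 := by
    have h3 : (1 : ℝ) < D + 2 := by linarith
    have h4 := (valSeq_le_of_le h3 (c := fun _ => D) (fun _ => le_rfl) hc)
    have h5 := valSeq_split h3 (c := fun _ => D) (D := D) (fun _ => le_rfl) 1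
    have h6 : shiftn 1 (fun _ : ℕ => D) = fun _ => D := rfl
    rw [h6] at h5
    simp only [Finset.sum_range_one, zero_add, pow_one] at h5
    rw [← add_div, eq_div_iff (by linarith)] at h5
    nlinarith
  have hcont : ContinuousOn (fun β => valSeq β c) (Set.Icc β₀ (D + 2)) := by
    refine continuousOn_tsum (u := fun i => (D : ℝ) / β₀ ^ (i + 1)) (fun i => ?_)
      (summable_bound h1 D) fun i x hx => ?_
    · refine ContinuousOn.div continuousOn_const (continuousOn_pow _) fun x hx => ?_
      have : 0 < x := by linarith [hx.1]
      positivity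
    · have : 0 < x := by linarith [hx.1]
      rw [Real.norm_of_nonneg (by positivity)]
      have h3 : (c i : ℝ) ≤ D := by exact_mod_cast hc i
      have h4 := hx.1
      gcongr
  obtain ⟨β, hβ, hv⟩ := intermediate_value_Icc' (by linarith) hcont ⟨hupp, hlow⟩
  exact ⟨β, h1.trans_le hβ.1, hv⟩

/-- If `z ≺ y` and all proper tails of `z` have value at most one, then `z` has at most the
value of `y`; the difference is at least the value of the tail of `y` after the first
difference. -/
theorem valSeq_add_le (hβ : 1 < β) {z y : ℕ → ℕ} (hz : ∀ i, z i ≤ D) (hy : ∀ i, y i ≤ D) {k : ℕ}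
    (h1 : ∀ i < k, z i = y i) (h2 : z k < y k) {δ : ℝ} (h3 : valSeq β (shiftn (k + 1) z) ≤ 1 + δ) :
    valSeq β z + valSeq β (shiftn (k + 1) y) / β ^ (k + 1) ≤ valSeq β y + δ / β ^ (k + 1) := by
  rw [valSeq_split hβ hz (k + 1), valSeq_split hβ hy (k + 1), Finset.sum_range_succ,
    Finset.sum_range_succ, Finset.sum_congr rfl fun i hi => by
      rw [h1 i (Finset.mem_range.mp hi)]]
  have h4 : (z k : ℝ) + 1 ≤ y k := by exact_mod_cast h2
  have h5 : ((z k : ℝ) + valSeq β (shiftn (k + 1) z)) / β ^ (k + 1) ≤ (y k + δ) / β ^ (k + 1) := by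
    gcongr ?_ / _
    linarith
  rw [add_div, add_div] at h5
  linarith

theorem valSeq_le_of_seqLt (hβ : 1 < β) {z y : ℕ → ℕ} (hz : ∀ i, z i ≤ D) (hy : ∀ i, y i ≤ D)
    (h : seqLt z y) (h1 : ∀ n, 1 ≤ n → valSeq β (shiftn n z) ≤ 1) : valSeq β z ≤ valSeq β y := by
  obtain ⟨k, h2, h3⟩ := h
  have h4 := valSeq_add_le hβ hz hy h2 h3 (δ := 0) (by simpa using h1 (k + 1) (by omega))
  have h5 := valSeq_nonneg hβ (shiftn (k + 1) y)
  have : 0 ≤ valSeq β (shiftn (k + 1) y) / β ^ (k + 1) := by positivity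
  rw [zero_div] at h4
  linarith

theorem valSeq_lt_of_seqLt (hβ : 1 < β) {z y : ℕ → ℕ} (hz : ∀ i, z i ≤ D) (hy : ∀ i, y i ≤ D)
    (h : seqLt z y) (h1 : ∀ n, 1 ≤ n → valSeq β (shiftn n z) ≤ 1)
    (hpos : ∀ n, 0 < valSeq β (shiftn n y)) : valSeq β z < valSeq β y := by
  obtain ⟨k, h2, h3⟩ := h
  have h4 := valSeq_add_le hβ hz hy h2 h3 (δ := 0) (by simpa using h1 (k + 1) (by omega))
  have h5 := hpos (k + 1)
  have : 0 < valSeq β (shiftn (k + 1) y) / β ^ (k + 1) := by positivity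
  rw [zero_div] at h4
  linarith

/-- Tails of a sequence all of whose shifts are bounded by a sequence of value at most one have
value at most one. -/
theorem valSeq_shiftn_le_one (hβ : 1 < β) {x y : ℕ → ℕ} (hx : ∀ i, x i ≤ D) (hy : ∀ i, y i ≤ D)
    (hxy : ∀ n, ¬ seqLt y (shiftn n x)) (h1 : valSeq β y ≤ 1) (n : ℕ) :
    valSeq β (shiftn n x) ≤ 1 := by
  set V := valSeq β fun _ => D
  have hV : 0 ≤ V := valSeq_nonneg hβ _
  have key : ∀ m n, valSeq β (shiftn n x) ≤ 1 + V / β ^ m := by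
    intro m
    induction m with
    | zero =>
      intro n
      have := valSeq_le_of_le hβ (c := fun _ => D) (fun _ => le_rfl) (c' := shiftn n x)
        fun i => hx _
      simp only [pow_zero, div_one]
      linarith
    | succ m ih =>
      intro n
      have hpos : 0 ≤ V / β ^ (m + 1) := by positivity
      rcases seqLt_trichotomy (shiftn n x) y with ⟨k, h2, h3⟩ | h2 | h2
      · have h4 := valSeq_add_le hβ (z := shiftn n x) (fun i => hx _) hy h2 h3 (δ := V / β ^ m) (by
          rw [shiftn_shiftn]; exact ih _)
        have h5 := valSeq_nonneg hβ (shiftn (k + 1) y)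
        have h6 : 0 ≤ valSeq β (shiftn (k + 1) y) / β ^ (k + 1) := by positivity
        have h7 : V / β ^ m / β ^ (k + 1) ≤ V / β ^ (m + 1) := by
          rw [div_div, ← pow_add]
          gcongr
          · exact hβ.le
          · omega
        linarith
      · rw [h2]; linarith
      · exact absurd h2 (hxy n)
  refine ge_of_tendsto' (x := atTop) (f := fun m : ℕ => 1 + V / β ^ m) ?_ fun m => key m n
  have := (tendsto_pow_atTop_nhds_zero_of_lt_one (by positivity)
    (inv_lt_one_of_one_lt₀ hβ)).const_mul V |>.const_add 1
  simpa [div_eq_mul_inv] using this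

end values

section Jint

variable {N : ℕ} {a b : ℕ → ℕ}

theorem LyndonPair.exists_bound (h : LyndonPair N a b) : ∃ D, (∀ i, a i ≤ D) ∧ (∀ i, b i ≤ D) ∧
    ∀ c i, phiInf N a b c i ≤ D := by
  have ha : ∀ i, a i ≤ ∑ k ∈ Finset.range N, a k := by
    intro i
    have h1 := congrFun (h.shiftn_mod i) 0
    simp only [shiftn_apply, zero_add] at h1
    rw [h1]
    exact Finset.single_le_sum (f := a) (fun k _ => Nat.zero_le _)
      (Finset.mem_range.mpr (Nat.mod_lt _ h.pos))
  have hb : ∀ i, b i ≤ ∑ k ∈ Finset.range N, a k := by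
    obtain ⟨j, rfl⟩ := h.rot
    exact fun i => ha _
  refine ⟨∑ k ∈ Finset.range N, a k + 1, fun i => (ha i).trans (by omega),
    fun i => (hb i).trans (by omega), fun c i => ?_⟩
  have h1 := ha (i % N)
  have h2 := hb (i % N)
  rw [phiInf, blk]
  split_ifs <;> omega

theorem LyndonPair.exists_pos_left (h : LyndonPair N a b) (n : ℕ) : ∃ i, n ≤ i ∧ 1 ≤ a i := by
  refine ⟨N - 1 + n * N, ?_, ?_⟩
  · have := Nat.le_mul_of_pos_right n h.pos
    omega
  · have h1 := congrFun (shiftn_mul_of_periodic h.per n) (N - 1)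
    rw [shiftn_apply] at h1
    rw [h1]
    exact h.last

theorem LyndonPair.exists_pos_right (h : LyndonPair N a b) (n : ℕ) : ∃ i, n ≤ i ∧ 1 ≤ b i := by
  obtain ⟨j, hj⟩ := h.rot
  obtain ⟨i, hi, h1⟩ := h.exists_pos_left (n + j)
  refine ⟨i - j, by omega, ?_⟩
  rwa [hj, shiftn_apply, Nat.sub_add_cancel (by omega)]

theorem LyndonPair.right_zero (h : LyndonPair N a b) : 1 ≤ b 0 := by
  have hl := h.last
  by_contra hc
  refine h.max (N - 1) ⟨0, by simp, ?_⟩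
  rw [shiftn_apply, zero_add]
  omega

theorem Jint_spec {w : List ℕ} (h : LyndonPair w.length (perSeq w) b) {β : ℝ} (hβ : β ∈ Jint w) :
    1 < β ∧ valSeq β b ≤ 1 ∧ 1 ≤ valSeq β (phiInf w.length (perSeq w) b (headSeq 0 1)) := by
  obtain ⟨D, -, hb, hphi⟩ := h.exists_bound
  have hL : 1 < betaL w ∧ valSeq (betaL w) b = 1 := by
    rw [betaL, (maxCyc_spec h).2]
    exact Classical.epsilon_spec (p := fun β : ℝ => 1 < β ∧ valSeq β b = 1)
      (exists_base hb h.exists_pos_right)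
  have hR : 1 < betaR w ∧
      valSeq (betaR w) (phiInf w.length (perSeq w) b (headSeq 0 1)) = 1 := by
    rw [betaR, wordSeq_wplus_maxCyc h]
    refine Classical.epsilon_spec (p := fun β : ℝ => 1 < β ∧
      valSeq β (phiInf w.length (perSeq w) b (headSeq 0 1)) = 1)
      (exists_base (hphi (headSeq 0 1)) fun n => ?_)
    obtain ⟨i, hi, h1⟩ := h.exists_pos_left n
    refine ⟨i + w.length, by omega, ?_⟩
    have h2 := congrFun (shiftn_phiInf_headSeq (a := perSeq w) (b := b) h.pos 0 1) i
    rw [phiInf_one h, shiftn_apply] at h2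
    rwa [h2]
  have h1 : 1 < β := hL.1.trans_le hβ.1
  refine ⟨h1, ?_, ?_⟩
  · rw [← hL.2]
    exact valSeq_antitone hL.1 hβ.1 hb
  · rw [← hR.2]
    exact valSeq_antitone h1 hβ.2 (hphi _)

end Jint

/-! ### Greedy expansions and the upper bound -/

noncomputable section

/-- The greedy digits of `x` in base `β`. -/
def greedyDigit (β x : ℝ) (i : ℕ) : ℕ := ⌊β * (Tbeta β)^[i] x⌋₊

end

section greedy

variable {β x : ℝ}

theorem shiftn_greedyDigit (β x : ℝ) (n : ℕ) :
    shiftn n (greedyDigit β x) = greedyDigit β ((Tbeta β)^[n] x) := by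
  funext i
  rw [shiftn_apply, greedyDigit, greedyDigit, Function.iterate_add_apply]

theorem iterate_Tbeta_mem (hx : x ∈ Ico (0 : ℝ) 1) (n : ℕ) : (Tbeta β)^[n] x ∈ Ico (0 : ℝ) 1 := by
  rcases n with _ | n
  · exact hx
  · rw [Function.iterate_succ_apply']
    exact ⟨Int.fract_nonneg _, Int.fract_lt_one _⟩

theorem greedyDigit_le (hβ : 1 < β) (hx : x ∈ Ico (0 : ℝ) 1) (i : ℕ) :
    greedyDigit β x i ≤ ⌊β⌋₊ := by
  refine Nat.floor_le_floor ?_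
  have := (iterate_Tbeta_mem (β := β) hx i).2
  nlinarith

theorem eq_digit_add (hβ : 1 < β) (hx : x ∈ Ico (0 : ℝ) 1) :
    x = greedyDigit β x 0 / β + Tbeta β x / β := by
  have h0 : 0 ≤ β * x := mul_nonneg (by linarith) hx.1
  have h1 : (greedyDigit β x 0 : ℝ) = ⌊β * x⌋ := by
    rw [greedyDigit, Function.iterate_zero_apply, natCast_floor_eq_intCast_floor h0]
  rw [h1, Tbeta, ← add_div, Int.floor_add_fract]
  field_simp

theorem eq_sum_add (hβ : 1 < β) (hx : x ∈ Ico (0 : ℝ) 1) (n : ℕ) :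
    x = ∑ i ∈ Finset.range n, (greedyDigit β x i : ℝ) / β ^ (i + 1) + (Tbeta β)^[n] x / β ^ n := by
  induction n with
  | zero => simp
  | succ n ih =>
    have h1 := eq_digit_add hβ (iterate_Tbeta_mem (β := β) hx n)
    rw [← shiftn_greedyDigit, shiftn_apply, zero_add] at h1
    rw [Finset.sum_range_succ, Function.iterate_succ_apply']
    conv_lhs => rw [ih, h1]
    rw [add_div, div_div, div_div, ← pow_succ']
    ring

theorem valSeq_greedyDigit (hβ : 1 < β) (hx : x ∈ Ico (0 : ℝ) 1) :
    valSeq β (greedyDigit β x) = x := by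
  refine HasSum.tsum_eq ((hasSum_iff_tendsto_nat_of_nonneg (fun i => by positivity) _).mpr ?_)
  have h1 : Tendsto (fun n : ℕ => (Tbeta β)^[n] x / β ^ n) atTop (𝓝 0) := by
    refine squeeze_zero (g := fun n : ℕ => β⁻¹ ^ n) (fun n => ?_) (fun n => ?_)
      (tendsto_pow_atTop_nhds_zero_of_lt_one (by positivity) (inv_lt_one_of_one_lt₀ hβ))
    · have := (iterate_Tbeta_mem (β := β) hx n).1
      positivity
    · have := (iterate_Tbeta_mem (β := β) hx n).2.le
      rw [inv_pow, ← one_div]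
      gcongr
  have h2 := h1.const_sub x
  rw [sub_zero] at h2
  refine h2.congr fun n => ?_
  have := eq_sum_add hβ hx n
  linarith

end greedy

section upper

variable {N : ℕ} {a b : ℕ → ℕ} {β : ℝ}

theorem not_ltBelow_greedyDigit (hβ : 1 < β) {x : ℝ} (hx : x ∈ Ico (0 : ℝ) 1)
    (h : ∑ i ∈ Finset.range N, (a i : ℝ) / β ^ (i + 1) ≤ x) :
    ¬ ltBelow N (greedyDigit β x) a := by
  rintro ⟨k, hk, h1, h2⟩
  have h3 := eq_sum_add hβ hx (k + 1)
  have h4 := (iterate_Tbeta_mem (β := β) hx (k + 1)).2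
  have h5 : ∑ i ∈ Finset.range (k + 1), (a i : ℝ) / β ^ (i + 1) ≤
      ∑ i ∈ Finset.range N, (a i : ℝ) / β ^ (i + 1) :=
    Finset.sum_le_sum_of_subset_of_nonneg (Finset.range_mono hk) fun i _ _ => by positivity
  rw [Finset.sum_range_succ] at h3 h5
  rw [Finset.sum_congr rfl fun i hi => by rw [h1 i (Finset.mem_range.mp hi)]] at h3
  have h6 : (greedyDigit β x k : ℝ) + 1 ≤ a k := by exact_mod_cast h2
  have h7 : ((greedyDigit β x k : ℝ) + (Tbeta β)^[k + 1] x) / β ^ (k + 1) <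
      a k / β ^ (k + 1) := by
    gcongr ?_ / _
    linarith
  rw [add_div] at h7
  linarith

/-- Proper tails of `L(s)⁺ s^∞` do not exceed `L(s)^∞`. -/
theorem not_right_lt_shiftn_headSeq (h : LyndonPair N a b) {n : ℕ} (hn : 1 ≤ n) :
    ¬ seqLt b (shiftn n (phiInf N a b (headSeq 0 1))) := by
  intro hlt
  obtain ⟨q, hq⟩ := exists_ltBelow_shiftn_right h.pos h.per_right hlt
  rw [shiftn_shiftn] at hq
  refine not_window_ltBelow h _ ?_ hq
  by_cases hm : (n + q * N) % N = 0
  · right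
    have h1 : (n + q * N) / N ≠ 0 := by
      intro h0
      have := Nat.div_add_mod (n + q * N) N
      rw [h0, hm] at this
      omega
    obtain ⟨m, hm⟩ := Nat.exists_eq_succ_of_ne_zero h1
    rw [hm]
    simp
  · exact Or.inl hm

theorem countable_survivor (h : LyndonPair N a b) (hQ : ForcesEvPer a b) (hβ : 1 < β)
    (hb : valSeq β b ≤ 1) (hr : 1 ≤ valSeq β (phiInf N a b (headSeq 0 1))) {t : ℝ}
    (ht : ∑ i ∈ Finset.range N, (a i : ℝ) / β ^ (i + 1) ≤ t) : (survivor β t).Countable := by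
  refine (countable_evPer.image (valSeq β)).mono fun x hx => ?_
  refine ⟨greedyDigit β x, ?_, valSeq_greedyDigit hβ hx.1⟩
  obtain ⟨D, -, hbD, hphi⟩ := h.exists_bound
  have hmem := fun i => iterate_Tbeta_mem (β := β) hx.1 i
  refine ForcesEvPer.relax h hQ (fun i hlt => ?_) fun i hlt => ?_
  · obtain ⟨q, hq⟩ := exists_ltBelow_shiftn_left h.pos h.per hlt
    rw [shiftn_shiftn, shiftn_greedyDigit] at hq
    exact not_ltBelow_greedyDigit hβ (hmem _) (ht.trans (hx.2 _)) hq
  · have h1 : ∀ n, 1 ≤ n → valSeq β (shiftn n (phiInf N a b (headSeq 0 1))) ≤ 1 := by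
      intro n hn
      obtain ⟨m, rfl⟩ := Nat.exists_eq_add_of_le hn
      rw [← shiftn_shiftn]
      refine valSeq_shiftn_le_one hβ (x := shiftn 1 (phiInf N a b (headSeq 0 1)))
        (fun i => hphi _ _) hbD (fun k => ?_) hb m
      rw [shiftn_shiftn]
      exact not_right_lt_shiftn_headSeq h (by omega)
    rw [shiftn_greedyDigit] at hlt
    have h2 := valSeq_le_of_seqLt hβ (D := D + ⌊β⌋₊) (fun i => (hphi _ _).trans (by omega))
      (fun i => (greedyDigit_le hβ (hmem _) i).trans (by omega)) hlt h1
    rw [valSeq_greedyDigit hβ (hmem i)] at h2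
    exact absurd (hmem i).2 (by linarith)

end upper

/-! ### The lower bound -/

/-- The binary sequence with the digits `ω` at the positive multiples of `m`, and zero elsewhere. -/
def sparse (m : ℕ) (ω : ℕ → Fin 2) (q : ℕ) : ℕ :=
  if q = 0 ∨ q % m ≠ 0 then 0 else (ω (q / m - 1) : ℕ)

theorem sparse_le_one (m : ℕ) (ω : ℕ → Fin 2) (q : ℕ) : sparse m ω q ≤ 1 := by
  rw [sparse]
  split_ifs
  · exact Nat.zero_le _
  · have := (ω (q / m - 1)).isLt
    omega

theorem sparse_mul_succ {m : ℕ} (hm : 0 < m) (ω : ℕ → Fin 2) (j : ℕ) :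
    sparse m ω (m * (j + 1)) = ω j := by
  rw [sparse, if_neg, Nat.mul_div_cancel_left _ hm, Nat.add_sub_cancel]
  simp only [Nat.mul_mod_right, ne_eq, not_true_eq_false, or_false]
  exact (Nat.mul_pos hm (Nat.succ_pos j)).ne'

theorem sparse_congr {m j : ℕ} {ω ω' : ℕ → Fin 2} (h : ∀ i < j, ω i = ω' i) {q : ℕ}
    (hq : q < m * (j + 1)) : sparse m ω q = sparse m ω' q := by
  rw [sparse, sparse]
  split_ifs with h0
  · rfl
  · push Not at h0
    have h1 : q / m < j + 1 := Nat.div_lt_of_lt_mul hq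
    have h2 : 0 < q / m := by
      refine Nat.pos_of_ne_zero fun h2 => h0.1 ?_
      rw [← Nat.div_add_mod q m, h2, h0.2]
      rfl
    rw [h _ (by omega)]

section lower

variable {N M : ℕ} {a b r l : ℕ → ℕ} {β : ℝ}

theorem shiftn_sparse_lt (hr : BinaryPair M r l) (ω : ℕ → Fin 2) (q : ℕ) :
    seqLt (shiftn q (sparse (M + 1) ω)) l := by
  have hle := sparse_le_one (M + 1) ω q
  rcases Nat.eq_zero_or_pos (sparse (M + 1) ω q) with h0 | h0
  · refine ⟨0, by simp, ?_⟩
    rw [shiftn_apply, zero_add, h0, hr.first_right]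
    exact one_pos
  · have hq : q % (M + 1) = 0 := by
      by_contra hc
      rw [sparse, if_pos (Or.inr hc)] at h0
      exact lt_irrefl _ h0
    have hzero : ∀ i, 1 ≤ i → i ≤ M → sparse (M + 1) ω (i + q) = 0 := by
      intro i hi hiM
      rw [sparse, if_pos]
      right
      rw [Nat.add_mod, hq, add_zero, Nat.mod_mod, Nat.mod_eq_of_lt (by omega)]
      omega
    classical
    have hex : ∃ i, 1 ≤ i ∧ l i = 1 := by
      refine ⟨M, hr.pos, ?_⟩
      have := hr.per_right 0
      rw [zero_add] at this
      rw [this, hr.first_right]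
    obtain ⟨h1, h2⟩ := Nat.find_spec hex
    have h3 : Nat.find hex ≤ M := by
      refine Nat.find_min' hex ⟨hr.pos, ?_⟩
      have := hr.per_right 0
      rw [zero_add] at this
      rw [this, hr.first_right]
    refine ⟨Nat.find hex, fun i hi => ?_, ?_⟩
    · rcases Nat.eq_zero_or_pos i with rfl | hi0
      · rw [shiftn_apply, zero_add, hr.first_right]
        omega
      · have h4 := Nat.find_min hex hi
        have h5 := hr.right_le_one i
        rw [shiftn_apply, hzero i hi0 (by omega)]
        by_contra h6
        exact h4 ⟨hi0, by omega⟩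
    · rw [h2, shiftn_apply, hzero _ h1 h3]
      exact one_pos

theorem shiftn_phiInf_sparse_lt (h : LyndonPair N a b) (hr : BinaryPair M r l) (ω : ℕ → Fin 2)
    (n : ℕ) : seqLt (shiftn n (phiInf N a b (sparse (M + 1) ω)))
      (phiInf N a b (shiftn (M - 1) l)) := by
  by_cases hn : n % N ≠ 0 ∨ sparse (M + 1) ω (n / N) ≠ 0
  · have hright := ltBelow_phiInf_right h (c := shiftn (M - 1) l) hr.pred_right_zero
      (by rw [hr.pred_right_one]; exact one_ne_zero)
    exact (ltBelow_of_not_of_lt (not_window_ltBelow h _ hn) hright).seqLt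
  · push Not at hn
    have h1 := Nat.div_add_mod' n N
    rw [hn.1, add_zero] at h1
    rw [← h1, shiftn_phiInf h.pos]
    refine phiInf_lt h ?_ (fun i => hr.right_le_one _) ?_
    · rw [hr.pred_right_zero, shiftn_apply, zero_add, hn.2]
    · rw [hr.shiftn_pred_right, shiftn_shiftn]
      exact shiftn_sparse_lt hr ω _

theorem valSeq_shiftn_phiInf_sparse_lt_one (h : LyndonPair N a b) (hr : BinaryPair M r l)
    (hβ : 1 < β) (hb : valSeq β (phiInf N a b (shiftn (M - 1) l)) ≤ 1) (ω : ℕ → Fin 2) (n : ℕ) :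
    valSeq β (shiftn n (phiInf N a b (sparse (M + 1) ω))) < 1 := by
  obtain ⟨D, -, -, hphi⟩ := h.exists_bound
  have h1 := valSeq_shiftn_le_one hβ (hphi _) (hphi _)
    (fun n => seqLt_asymm (shiftn_phiInf_sparse_lt h hr ω n)) hb
  refine lt_of_lt_of_le (valSeq_lt_of_seqLt hβ
    (z := shiftn n (phiInf N a b (sparse (M + 1) ω))) (fun i => hphi _ _) (hphi _)
    (shiftn_phiInf_sparse_lt h hr ω n) (fun m _ => ?_) fun m => ?_) hb
  · rw [shiftn_shiftn]
    exact h1 _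
  · obtain ⟨i, hi, h2⟩ := (h.renormalize hr).exists_pos_right m
    refine valSeq_pos hβ (c := shiftn m (phiInf N a b (shiftn (M - 1) l))) (fun _ => hphi _ _)
      (i := i - m) ?_
    rwa [shiftn_apply, Nat.sub_add_cancel hi]

/-- The sequence `s⁻ 0^∞`. -/
def decSeq (N : ℕ) (a : ℕ → ℕ) (i : ℕ) : ℕ :=
  if i + 1 < N then a i else if i + 1 = N then a i - 1 else 0

theorem decSeq_le (N : ℕ) (a : ℕ → ℕ) (i : ℕ) : decSeq N a i ≤ a i := by
  rw [decSeq]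
  split_ifs <;> omega

theorem valSeq_decSeq (h : LyndonPair N a b) (hβ : 1 < β) :
    valSeq β (decSeq N a) = ∑ i ∈ Finset.range N, (a i : ℝ) / β ^ (i + 1) - (β ^ N)⁻¹ := by
  obtain ⟨D, ha, -, -⟩ := h.exists_bound
  obtain ⟨K, rfl⟩ : ∃ K, N = K + 1 := ⟨N - 1, by have := h.pos; omega⟩
  have hlast := h.last
  rw [Nat.add_sub_cancel] at hlast
  have h1 : valSeq β (shiftn (K + 1) (decSeq (K + 1) a)) = 0 := by
    rw [valSeq]
    convert tsum_zero with i
    rw [shiftn_apply, decSeq, if_neg (by omega), if_neg (by omega)]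
    simp
  rw [valSeq_split hβ (fun i => (decSeq_le _ a i).trans (ha i)) (K + 1), h1, zero_div, add_zero,
    Finset.sum_range_succ, Finset.sum_range_succ]
  have h2 : decSeq (K + 1) a K = a K - 1 := by simp [decSeq]
  rw [h2, Nat.cast_sub hlast, Nat.cast_one, sub_div, one_div,
    Finset.sum_congr rfl fun i hi => by
      rw [decSeq, if_pos (by have := Finset.mem_range.mp hi; omega)]]
  ring

theorem not_shiftn_phiInf_lt_decSeq (h : LyndonPair N a b) (c : ℕ → ℕ) (n : ℕ) :
    ¬ seqLt (shiftn n (phiInf N a b c)) (decSeq N a) := by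
  rintro ⟨k, h1, h2⟩
  have hk : k < N := by
    by_contra hk
    rw [decSeq, if_neg (by omega), if_neg (by omega)] at h2
    omega
  by_cases hn : n % N ≠ 0 ∨ c (n / N) = 0
  · refine not_ltBelow_window h c hn ⟨k, hk, fun i hi => ?_, h2.trans_le (decSeq_le _ _ _)⟩
    rw [h1 i hi, decSeq, if_pos (by omega)]
  · push Not at hn
    have h3 := Nat.div_add_mod' n N
    rw [hn.1, add_zero] at h3
    rw [← h3, shiftn_phiInf h.pos, phiInf_apply_zero _ hk, blk, decSeq] at h2
    simp only [shiftn_apply, zero_add, hn.2, if_false] at h2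
    split_ifs at h2 <;> omega

theorem valSeq_decSeq_le (h : LyndonPair N a b) (hβ : 1 < β) (hb : valSeq β b ≤ 1) (c : ℕ → ℕ)
    (n : ℕ) : valSeq β (decSeq N a) ≤ valSeq β (shiftn n (phiInf N a b c)) := by
  obtain ⟨D, ha, hbD, hphi⟩ := h.exists_bound
  have h1 := valSeq_shiftn_le_one hβ ha hbD h.max hb
  rcases seqLt_trichotomy (decSeq N a) (shiftn n (phiInf N a b c)) with h2 | h2 | h2
  · refine valSeq_le_of_seqLt hβ (fun i => (decSeq_le _ a i).trans (ha i))
      (y := shiftn n (phiInf N a b c)) (fun _ => hphi _ _) h2 fun m _ => ?_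
    exact (valSeq_le_of_le hβ (c := shiftn m a) (c' := shiftn m (decSeq N a))
        (fun i => ha _) fun i => decSeq_le _ _ _).trans
      (h1 m)
  · rw [h2]
  · exact absurd h2 (not_shiftn_phiInf_lt_decSeq h c n)

theorem Tbeta_iterate_valSeq (hβ : 1 < β) {D : ℕ} {x : ℕ → ℕ} (hx : ∀ i, x i ≤ D)
    (h : ∀ n, valSeq β (shiftn n x) < 1) (n : ℕ) :
    (Tbeta β)^[n] (valSeq β x) = valSeq β (shiftn n x) := by
  induction n with
  | zero => rfl
  | succ n ih =>
    rw [Function.iterate_succ_apply', ih, Tbeta,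
      valSeq_split hβ (c := shiftn n x) (fun i => hx _) 1, shiftn_shiftn]
    have h1 : β * (∑ i ∈ Finset.range 1, (shiftn n x i : ℝ) / β ^ (i + 1) +
        valSeq β (shiftn (n + 1) x) / β ^ 1) = valSeq β (shiftn (n + 1) x) + (x n : ℕ) := by
      simp only [Finset.sum_range_one, shiftn_apply, zero_add, pow_one]
      field_simp
      ring
    rw [h1, Int.fract_add_natCast, Int.fract_eq_self.mpr ⟨valSeq_nonneg hβ _, h _⟩]

theorem valSeq_phiInf_sparse_mem (h : LyndonPair N a b) (hr : BinaryPair M r l) (hβ : 1 < β)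
    (hb : valSeq β b ≤ 1) (hb' : valSeq β (phiInf N a b (shiftn (M - 1) l)) ≤ 1) {t : ℝ}
    (ht : t ≤ valSeq β (decSeq N a)) (ω : ℕ → Fin 2) :
    valSeq β (phiInf N a b (sparse (M + 1) ω)) ∈ survivor β t := by
  obtain ⟨D, -, -, hphi⟩ := h.exists_bound
  have h1 := valSeq_shiftn_phiInf_sparse_lt_one h hr hβ hb' ω
  refine ⟨⟨valSeq_nonneg hβ _, h1 0⟩, fun n => ?_⟩
  rw [Tbeta_iterate_valSeq hβ (hphi _) h1]
  exact ht.trans (valSeq_decSeq_le h hβ hb _ n)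

theorem separation_of_lt (h : LyndonPair N a b) (hr : BinaryPair M r l) (hβ : 1 < β)
    (hb' : valSeq β (phiInf N a b (shiftn (M - 1) l)) ≤ 1) {ω ω' : ℕ → Fin 2} {j : ℕ}
    (h1 : ∀ i < j, ω i = ω' i) (h2 : ω j < ω' j) :
    (β ^ ((M + 1) * N * (j + 2)))⁻¹ ≤ valSeq β (phiInf N a b (sparse (M + 1) ω')) -
      valSeq β (phiInf N a b (sparse (M + 1) ω)) := by
  obtain ⟨D, -, -, hphi⟩ := h.exists_bound
  have hN := h.pos
  have hM := hr.two_le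
  have hlast := h.last
  set q := (M + 1) * (j + 1) with hq
  have hq0 : 0 < q := by positivity
  have hs : ∀ i < q, sparse (M + 1) ω i = sparse (M + 1) ω' i := fun i hi => sparse_congr h1 hi
  have hω : sparse (M + 1) ω q = 0 := by
    rw [hq, sparse_mul_succ (by omega)]; omega
  have hω' : sparse (M + 1) ω' q = 1 := by
    rw [hq, sparse_mul_succ (by omega)]; omega
  have hω'' : ∀ i, 1 ≤ i → i ≤ M → sparse (M + 1) ω' (q + i) = 0 := by
    intro i hi hiM
    rw [sparse, if_pos]
    right
    rw [hq, Nat.mul_add_mod, Nat.mod_eq_of_lt (by omega)]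
    omega
  have hpos : q * N - 1 + 1 = q * N := Nat.sub_add_cancel (Nat.mul_pos hq0 hN)
  have hsplit : q * N - 1 = (q - 1) * N + (N - 1) := by
    obtain ⟨p, hp⟩ := Nat.exists_eq_succ_of_ne_zero hq0.ne'
    rw [hp, Nat.succ_sub_one, Nat.succ_mul]
    omega
  have hadj := blk_adjacent h (sparse (M + 1) ω (q - 1))
  have key := valSeq_add_le hβ (hphi (sparse (M + 1) ω)) (hphi (sparse (M + 1) ω'))
    (k := q * N - 1) (δ := 0) (fun i hi => ?_) ?_ (by
      simpa using (valSeq_shiftn_phiInf_sparse_lt_one h hr hβ hb' ω _).le)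
  · rw [hpos, zero_div, add_zero] at key
    have h3 : (β ^ (N + 1))⁻¹ ≤
        valSeq β (shiftn (q * N) (phiInf N a b (sparse (M + 1) ω'))) := by
      have h4 := le_valSeq hβ (c := shiftn (q * N) (phiInf N a b (sparse (M + 1) ω')))
        (fun i => hphi _ _) N
      have h5 : shiftn (q * N) (phiInf N a b (sparse (M + 1) ω')) N = b 0 := by
        rw [shiftn_apply, show N + q * N = (q + 1) * N + 0 by ring, phiInf_apply _ _ hN,
          hω'' 1 le_rfl (by omega), show q + 1 + 1 = q + 2 by ring, hω'' 2 (by omega) (by omega)]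
        simp [blk]
      rw [h5] at h4
      refine le_trans ?_ h4
      have h6 : (1 : ℝ) ≤ b 0 := by exact_mod_cast h.right_zero
      rw [← one_div]
      gcongr
    have h7 : (β ^ ((M + 1) * N * (j + 2)))⁻¹ ≤ (β ^ (N + 1))⁻¹ / β ^ (q * N) := by
      rw [div_eq_mul_inv, ← mul_inv, ← pow_add]
      gcongr
      · exact hβ.le
      · rw [hq]
        nlinarith
    have h8 : (β ^ (N + 1))⁻¹ / β ^ (q * N) ≤
        valSeq β (shiftn (q * N) (phiInf N a b (sparse (M + 1) ω'))) / β ^ (q * N) := by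
      gcongr
    linarith
  · have h3 : i / N < q := Nat.div_lt_of_lt_mul (by rw [mul_comm]; omega)
    rw [phiInf, phiInf, hs _ h3]
    rcases (show i / N + 1 < q ∨ i / N + 1 = q by omega) with h4 | h4
    · rw [hs _ h4]
    · rw [h4, hω, hω', ← hs _ h3, show i / N = q - 1 by omega]
      refine hadj.1 _ ?_
      have h5 := Nat.div_add_mod' i N
      rw [show i / N = q - 1 by omega] at h5
      omega
  · rw [hsplit, phiInf_apply _ _ (by omega), phiInf_apply _ _ (by omega),
      show q - 1 + 1 = q by omega, hω, hω', ← hs _ (by omega), hadj.2]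
    omega

theorem separation (h : LyndonPair N a b) (hr : BinaryPair M r l) (hβ : 1 < β)
    (hb' : valSeq β (phiInf N a b (shiftn (M - 1) l)) ≤ 1) {ω ω' : ℕ → Fin 2} {j : ℕ}
    (h1 : ∀ i < j, ω i = ω' i) (h2 : ω j ≠ ω' j) :
    (β ^ ((M + 1) * N * (j + 2)))⁻¹ ≤ |valSeq β (phiInf N a b (sparse (M + 1) ω)) -
      valSeq β (phiInf N a b (sparse (M + 1) ω'))| := by
  rcases lt_or_gt_of_ne h2 with h3 | h3
  · rw [abs_sub_comm]
    exact (separation_of_lt h hr hβ hb' h1 h3).trans (le_abs_self _)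
  · exact (separation_of_lt h hr hβ hb' (fun i hi => (h1 i hi).symm) h3).trans (le_abs_self _)

end lower

/-- A family of reals indexed by binary sequences, separated at an exponential rate, has positive
Hausdorff dimension. -/
theorem dimH_range_pos {v : (ℕ → Fin 2) → ℝ} {γ : ℝ} (hγ : 1 < γ)
    (hv : ∀ ω ω' j, (∀ i < j, ω i = ω' i) → ω j ≠ ω' j →
      (γ ^ (j + 2))⁻¹ ≤ |v ω - v ω'|) : 0 < dimH (range v) := by
  classical
  have hlog : 0 < Real.log γ := Real.log_pos hγ
  have hr0 : 0 < Real.log 2 / Real.log γ := div_pos (Real.log_pos one_lt_two) hlog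
  lift Real.log 2 / Real.log γ to NNReal using hr0.le with ρ hρ
  have hρ0 : 0 < ρ := by exact_mod_cast hr0
  have hγρ : γ ^ (ρ : ℝ) = 2 := by
    rw [hρ, Real.rpow_def_of_pos (by linarith), mul_div_cancel₀ _ hlog.ne',
      Real.exp_log two_pos]
  have hfirst : ∀ ω ω' : ℕ → Fin 2, ω ≠ ω' → ∃ j, (∀ i < j, ω i = ω' i) ∧ ω j ≠ ω' j := by
    intro ω ω' hne
    have hex : ∃ j, ω j ≠ ω' j := Function.ne_iff.mp hne
    exact ⟨Nat.find hex, fun i hi => not_not.mp (Nat.find_min hex hi), Nat.find_spec hex⟩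
  have hinj : Function.Injective v := by
    intro ω ω' heq
    by_contra hne
    obtain ⟨j, h1, h2⟩ := hfirst ω ω' hne
    have h3 := hv ω ω' j h1 h2
    rw [heq, sub_self, abs_zero] at h3
    have : 0 < (γ ^ (j + 2))⁻¹ := by positivity
    linarith
  have hholder : HolderOnWith 4 ρ (Real.ofDigits ∘ Function.invFun v) (range v) := by
    rintro _ ⟨ω, rfl⟩ _ ⟨ω', rfl⟩
    simp only [Function.comp_apply, Function.leftInverse_invFun hinj _]
    by_cases hne : ω = ω'
    · simp [hne]
    obtain ⟨j, h1, h2⟩ := hfirst ω ω' hne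
    have h3 := hv ω ω' j h1 h2
    have h4 := Real.abs_ofDigits_sub_ofDigits_le h1
    have h5 : ((γ ^ (j + 2))⁻¹) ^ (ρ : ℝ) = (2 ^ (j + 2))⁻¹ := by
      rw [Real.inv_rpow (by positivity), ← Real.rpow_natCast γ, ← Real.rpow_mul (by linarith),
        mul_comm, Real.rpow_mul (by linarith), hγρ, Real.rpow_natCast]
    have h6 : |Real.ofDigits ω - Real.ofDigits ω'| ≤ 4 * |v ω - v ω'| ^ (ρ : ℝ) := by
      calc _ ≤ ((2 : ℝ) ^ j)⁻¹ := by exact_mod_cast h4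
        _ = 4 * ((γ ^ (j + 2))⁻¹) ^ (ρ : ℝ) := by
            rw [h5, pow_add]
            field_simp
            norm_num
        _ ≤ _ := by gcongr
    rw [edist_dist, edist_dist, Real.dist_eq, Real.dist_eq,
      ENNReal.ofReal_rpow_of_nonneg (abs_nonneg _) ρ.coe_nonneg]
    calc _ ≤ ENNReal.ofReal (4 * |v ω - v ω'| ^ (ρ : ℝ)) := ENNReal.ofReal_le_ofReal h6
      _ = _ := by
        rw [ENNReal.ofReal_mul (by norm_num)]
        congr 1
        simp
  have himage : Icc (0 : ℝ) 1 ⊆ (Real.ofDigits ∘ Function.invFun v) '' range v := by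
    intro x hx
    obtain ⟨ω, -, hω⟩ := Real.ofDigits_SurjOn one_lt_two hx
    exact ⟨v ω, ⟨ω, rfl⟩, by rw [Function.comp_apply, Function.leftInverse_invFun hinj, hω]⟩
  have hone : dimH (Icc (0 : ℝ) 1) = 1 := by
    simpa using Real.dimH_of_mem_nhds (Icc_mem_nhds (show (0 : ℝ) < 1 / 2 by norm_num)
      (show (1 / 2 : ℝ) < 1 by norm_num))
  have hle := (dimH_mono himage).trans (hholder.dimH_image_le hρ0)
  rw [hone] at hle
  refine pos_of_ne_zero fun h0 => ?_
  rw [h0, ENNReal.zero_div] at hle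
  simp at hle

theorem dimH_survivor_pos {N M : ℕ} {a b r l : ℕ → ℕ} {β t : ℝ} (h : LyndonPair N a b)
    (hr : BinaryPair M r l) (hβ : 1 < β) (hb : valSeq β b ≤ 1)
    (hb' : valSeq β (phiInf N a b (shiftn (M - 1) l)) ≤ 1)
    (ht : t ≤ ∑ i ∈ Finset.range N, (a i : ℝ) / β ^ (i + 1) - (β ^ N)⁻¹) :
    0 < dimH (survivor β t) := by
  rw [← valSeq_decSeq h hβ] at ht
  refine (dimH_range_pos (v := fun ω => valSeq β (phiInf N a b (sparse (M + 1) ω)))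
    (γ := β ^ ((M + 1) * N)) (one_lt_pow₀ hβ (by have := h.pos; positivity))
    fun ω ω' j h1 h2 => ?_).trans_le (dimH_mono ?_)
  · rw [← pow_mul]
    exact separation h hr hβ hb' h1 h2
  · rintro _ ⟨ω, rfl⟩
    exact valSeq_phiInf_sparse_mem h hr hβ hb hb' ht ω

theorem valWord_eq_sum_perSeq (β : ℝ) (w : List ℕ) :
    valWord β w = ∑ i ∈ Finset.range w.length, (perSeq w i : ℝ) / β ^ (i + 1) :=
  Finset.sum_congr rfl fun _ hi => by rw [perSeq_apply (Finset.mem_range.mp hi)]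

theorem tau_le_valWord {β : ℝ} {w : List ℕ} {b : ℕ → ℕ} (h : LyndonPair w.length (perSeq w) b)
    (hQ : ForcesEvPer (perSeq w) b) (hβ : β ∈ Jint w) :
    0 < valWord β w ∧ dimH (survivor β (valWord β w)) = 0 ∧ tau β ≤ valWord β w := by
  obtain ⟨h1, hb, hr⟩ := Jint_spec h hβ
  have h0 : 0 < β := by linarith
  have hpos : 0 < valWord β w := by
    rw [valWord_eq_sum_perSeq]
    refine Finset.sum_pos' (fun i _ => by positivity)
      ⟨w.length - 1, Finset.mem_range.mpr (Nat.sub_lt h.pos one_pos), ?_⟩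
    have := h.last
    positivity
  have hdim := (countable_survivor h hQ h1 hb hr (valWord_eq_sum_perSeq β w).ge).dimH_zero
  exact ⟨hpos, hdim, csInf_le ⟨0, fun _ ht => ht.1.le⟩ ⟨hpos, hdim⟩⟩

theorem valWord_sub_le_tau {β : ℝ} {w r : List ℕ} {b l : ℕ → ℕ}
    (h : LyndonPair w.length (perSeq w) b) (hQ : ForcesEvPer (perSeq w) b)
    (hr : BinaryPair r.length (perSeq r) l) (hβ : β ∈ Jint w) (hβ' : β ∈ Jint (subst w r)) :
    valWord β w - (β ^ w.length)⁻¹ ≤ tau β := by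
  obtain ⟨h1, hb, -⟩ := Jint_spec h hβ
  have hren := h.renormalize hr
  rw [← perSeq_subst h hr, ← length_subst h] at hren
  obtain ⟨hpos, hdim, -⟩ := tau_le_valWord h hQ hβ
  refine le_csInf ⟨_, hpos, hdim⟩ fun t ht => le_of_not_ge fun hle => ?_
  rw [valWord_eq_sum_perSeq] at hle
  exact (dimH_survivor_pos h hr h1 hb (Jint_spec hren hβ').2.1 hle).ne' ht.2

/-- Let `β ∈ E_∞` with coding `(s_k)`, i.e. `s₁ ∈ F_e`, `s_k ∈ F` for
`k ≥ 2`, and `β ∈ J^{s₁•…•s_k}` for every `k ≥ 1`.  Then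
`τ(β) = lim_{n→∞} (s₁•…•s_n 0^∞)_β`.  (Here `s` is indexed from `0`.) -/
theorem tau_on_Einf (β : ℝ) (s : ℕ → List ℕ)
    (h1 : s 0 ∈ FareyExt) (h2 : ∀ k : ℕ, 1 ≤ k → s k ∈ FareySet)
    (h3 : ∀ k : ℕ, β ∈ Jint ((List.ofFn fun i : Fin k => s (i + 1)).foldl subst (s 0))) :
    Filter.Tendsto
      (fun n : ℕ => valWord β ((List.ofFn fun i : Fin n => s (i + 1)).foldl subst (s 0)))
      Filter.atTop (𝓝 (tau β)) := by
  change ∀ k, β ∈ Jint (iterSubst s k) at h3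
  change Tendsto (fun n => valWord β (iterSubst s n)) atTop (𝓝 (tau β))
  have hβ : 1 < β := by
    obtain ⟨b, hb, -⟩ := iterSubst_lyndonPair h1 h2 0
    exact (Jint_spec hb (h3 0)).1
  have hlim : Tendsto (fun n : ℕ => tau β + β⁻¹ ^ n) atTop (𝓝 (tau β)) := by
    simpa using (tendsto_pow_atTop_nhds_zero_of_lt_one (inv_nonneg.mpr (zero_le_one.trans hβ.le))
      (inv_lt_one_of_one_lt₀ hβ)).const_add (tau β)
  refine tendsto_of_tendsto_of_tendsto_of_le_of_le tendsto_const_nhds hlim (fun n => ?_)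
    fun n => ?_
  all_goals obtain ⟨b, hb, hQ⟩ := iterSubst_lyndonPair h1 h2 n
  · exact (tau_le_valWord hb hQ (h3 n)).2.2
  · have hr := (FareySet_binaryPair (h2 (n + 1) (by omega))).1
    have hle := valWord_sub_le_tau hb hQ hr (h3 n) (iterSubst_succ s n ▸ h3 (n + 1))
    have hpow : (β ^ (iterSubst s n).length)⁻¹ ≤ β⁻¹ ^ n := by
      rw [inv_pow]
      exact inv_anti₀ (by positivity) (pow_le_pow_right₀ hβ.le (le_length_iterSubst h1 h2 n))
    change valWord β (iterSubst s n) ≤ tau β + β⁻¹ ^ n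
    linarith
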